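/- arXiv:2406.17506 — 3 statements merged into one kernel-verified Lean document; each statement's English description precedes it below -/
import Mathlib

section
/- Let L > 0, μ < 0, and let f : E → ℝ be a differentiable function on a real inner product space E with f ∈ F_{μ,L} and f_* := inf_x f(x) > −∞. Fix an integer N ≥ 1 and a stepsize γ > 0 with γL ∈ (0,2) and γL ≠ 1, and let x_{i+1} = x_i − γ∇f(x_i) for i = 0,…,N−1. Define P_N(γL, γμ) := p(γL, γμ) · ( N − (−γL·γμ/(γL − γμ)) · Σ_{k=0}^{N} max{ (−1 + (1−γμ)^{−2k})/(γμ) − (−1 + (1−γL)^{−2k})/(γL) , 0 } ). Then (1/(2L)) · min_{0≤i≤N} ‖∇f(x_i)‖² ≤ (f(x_0) − f_*) / ( 1 + γL · min{ P_N(γL, γμ) , (−1 + (1−γL)^{−2N})/(γL) } ). -/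
/-- The coefficient `p(l,u) := 2 − (−l·u)/((1−u) − |1−l|)` from the nonconvex rates. -/
noncomputable def pcoef (l u : ℝ) : ℝ := 2 - -(l * u) / ((1 - u) - |1 - l|)

open scoped InnerProductSpace

section Interpolation

variable {E : Type*} [NormedAddCommGroup E] [InnerProductSpace ℝ E]

/-- First-order characterisation of convexity (tangent hyperplanes lie below the graph). -/
lemma ConvexOn.add_fderiv_le {φ : E → ℝ} {φ' : E →L[ℝ] ℝ} (hφ : ConvexOn ℝ Set.univ φ) {x : E}
    (hd : HasFDerivAt φ φ' x) (y : E) : φ x + φ' (y - x) ≤ φ y := by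
  have hline : HasDerivAt (fun r : ℝ => φ (AffineMap.lineMap x y r)) (φ' (y - x)) 0 := by
    have h1 : HasDerivAt (AffineMap.lineMap x y : ℝ → E) (y - x) 0 :=
      AffineMap.hasDerivAt_lineMap
    have h2 : HasFDerivAt φ φ' (AffineMap.lineMap x y (0 : ℝ)) := by simpa using hd
    exact h2.comp_hasDerivAt 0 h1
  have hconv := hφ.comp_affineMap (AffineMap.lineMap x y : ℝ →ᵃ[ℝ] E)
  have := hconv.le_slope_of_hasDerivAt (x := 0) (y := 1) (by simp) (by simp) one_pos hline
  simp [slope_def_field] at this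
  rw [map_sub]
  linarith

/-- The quadratic lower model of a function whose sum with `a/2 ‖·‖²` is convex. -/
lemma quadratic_lower_model [CompleteSpace E] {f : E → ℝ} {a : ℝ} (hdiff : Differentiable ℝ f)
    (hconv : ConvexOn ℝ Set.univ (fun z => f z + a / 2 * ‖z‖ ^ 2)) (y z : E) :
    f y + ⟪gradient f y, z - y⟫_ℝ - a / 2 * ‖z - y‖ ^ 2 ≤ f z := by
  have hf := (hdiff y).hasGradientAt.hasFDerivAt
  generalize gradient f y = g at hf ⊢
  have hq := ((hasStrictFDerivAt_norm_sq y).hasFDerivAt (𝕜 := ℝ)).const_mul (a / 2)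
  have h := hconv.add_fderiv_le (hf.add hq) z
  simp [inner_sub_right] at h
  rw [norm_sub_sq_real, inner_sub_right, real_inner_comm y z]
  linarith

/-- Interpolation inequality of `F_{μ,L}`, deduced from the two quadratic models. -/
lemma interpolation_of_quadratic_models {f : E → ℝ} {G : E → E} {L μ : ℝ} (hLμ : μ < L)
    (hup : ∀ y z, f z ≤ f y + ⟪G y, z - y⟫_ℝ + L / 2 * ‖z - y‖ ^ 2)
    (hlo : ∀ y z, f y + ⟪G y, z - y⟫_ℝ + μ / 2 * ‖z - y‖ ^ 2 ≤ f z) (y z : E) :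
    ⟪G y, y - z⟫_ℝ - L / 2 * ‖y - z‖ ^ 2
      + (L - μ)⁻¹ / 2 * ‖(G y - G z) - L • (y - z)‖ ^ 2 ≤ f y - f z := by
  obtain ⟨v, hv⟩ : ∃ v, v = (G y - G z) - L • (y - z) := ⟨_, rfl⟩
  obtain ⟨e, he⟩ : ∃ e, e = y - z := ⟨_, rfl⟩
  have hκ : 0 < L - μ := sub_pos.2 hLμ
  have h1 := hlo z (z - (L - μ)⁻¹ • v)
  have h2 := hup y (z - (L - μ)⁻¹ • v)
  have e1 : z - (L - μ)⁻¹ • v - y = -(L - μ)⁻¹ • v - e := by rw [he, neg_smul]; abel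
  have e2 : z - (L - μ)⁻¹ • v - z = -(L - μ)⁻¹ • v := by rw [neg_smul]; abel
  have e3 : G z = G y - v - L • e := by rw [hv, he]; abel
  rw [e2, e3] at h1
  rw [e1] at h2
  rw [← hv, ← he]
  simp only [norm_sub_sq_real, inner_sub_left, inner_sub_right, real_inner_smul_left,
    real_inner_smul_right, norm_smul, mul_pow, Real.norm_eq_abs, sq_abs,
    real_inner_self_eq_norm_sq, real_inner_comm v e] at h1 h2
  have key : (L - μ)⁻¹ * (L - μ) = 1 := inv_mul_cancel₀ hκ.ne'
  linear_combination h1 + h2 + (L - μ)⁻¹ / 2 * ‖v‖ ^ 2 * key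

end Interpolation

/-- The scalar identity behind the induction step of `descent_long_step`. -/
lemma one_step_identity {s t c e' r' a11 a12 a13 a22 a23 a33 : ℝ} (hc : c * (t - s) = 1) :
    (1 / 2 * s ^ 2 * e' * a11 + c / 2 * (t ^ 2 * r' + e' * (s + t)) * a22
        + (-s * e' + (1 + s) * s * t * c * r') * (-a12 + c * a22)
        - s * t * c * r' * (-((1 + s) * (a12 + a13) + a22 + a23) + c * (a22 + 2 * a23 + a33)))
      = 1 / 2 * e' * (s ^ 2 * a11 + 2 * s * a12 + a22) + c / 2 * r' * a33
        - (1 + s) * t * c * r' * (-(s * a13 + a23) + c * a33)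
        + c / 2 * c * r' * (t + s) * (t ^ 2 * a22 - 2 * t * a23 + a33) := by
  have ht : t ≠ s := by rintro rfl; simp at hc
  have : t - s ≠ 0 := sub_ne_zero.2 ht
  obtain rfl : c = 1 / (t - s) := by field_simp; linarith
  field_simp
  ring

section PowerSums

/-- The sum `∑_{j=1}^{2k} s⁻ʲ` in closed form. -/
noncomputable def powSum (s : ℝ) (k : ℕ) : ℝ := (-1 + s ^ (-(2 * (k : ℤ)))) / (1 - s)

variable {s t : ℝ}

@[simp] lemma powSum_zero (s : ℝ) : powSum s 0 = 0 := by simp [powSum]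

lemma powSum_succ (h0 : s ≠ 0) (h1 : s ≠ 1) (k : ℕ) :
    s ^ 2 * powSum s (k + 1) = powSum s k + 1 + s := by
  have h : 1 - s ≠ 0 := sub_ne_zero.2 h1.symm
  have e : s ^ (-(2 * (k : ℤ))) = s ^ 2 * s ^ (-(2 * ((k + 1 : ℕ) : ℤ))) := by
    rw [← zpow_natCast s 2, ← zpow_add₀ h0]
    congr 1
    push_cast
    ring
  rw [powSum, powSum, e]
  field_simp
  ring

lemma powSum_nonneg (h0 : s ≠ 0) (h1 : s ≠ 1) (hs : -1 < s) (k : ℕ) : 0 ≤ powSum s k := by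
  induction k with
  | zero => simp
  | succ k ih =>
    have h := powSum_succ h0 h1 k
    have : 0 < s ^ 2 := by positivity
    by_contra! hneg
    nlinarith

lemma powSum_mono_of_pos (hs0 : 0 < s) (hs1 : s < 1) (ht : 1 < t) (k : ℕ) :
    powSum t k ≤ powSum s k := by
  induction k with
  | zero => simp
  | succ k ih =>
    have h := powSum_succ hs0.ne' hs1.ne k
    have h' := powSum_succ (by positivity) ht.ne' k (s := t)
    have a : 0 ≤ powSum s k := powSum_nonneg hs0.ne' hs1.ne (by linarith) k
    have b : 0 ≤ powSum t (k + 1) := powSum_nonneg (by positivity) ht.ne' (by linarith) _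
    have b' : powSum t (k + 1) ≤ powSum t k + 2 := by
      have : t ^ 2 * powSum t (k + 1) ≤ t ^ 2 * (powSum t k + 2) := by
        have : 0 ≤ powSum t k := powSum_nonneg (by positivity) ht.ne' (by linarith) _
        have : 1 < t ^ 2 := one_lt_pow₀ ht two_ne_zero
        nlinarith
      exact le_of_mul_le_mul_left this (by positivity)
    have a' : powSum s k + 2 ≤ powSum s (k + 1) := by
      have : s ^ 2 * (powSum s k + 2) ≤ s ^ 2 * powSum s (k + 1) := by
        have : s ^ 2 < 1 := by nlinarith
        nlinarith
      exact le_of_mul_le_mul_left this (by positivity)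
    linarith

lemma mul_powSum_le_of_neg (hs : -1 < s) (hs0 : s < 0) (ht : 1 < t) (k : ℕ) :
    (1 + s) * t * powSum t k ≤ (t - s) ^ 2 * powSum s k := by
  induction k with
  | zero => simp
  | succ k ih =>
    have h := powSum_succ hs0.ne (by linarith) k
    have h' := powSum_succ (by positivity) ht.ne' k (s := t)
    have a : 0 ≤ powSum s k := powSum_nonneg hs0.ne (by linarith) hs k
    have b : 0 ≤ powSum t k := powSum_nonneg (by positivity) ht.ne' (by linarith) _
    have hss : s ^ 2 < 1 := by nlinarith
    have key : s ^ 2 * (1 + t) ≤ t * (t - s) ^ 2 := by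
      nlinarith [mul_pos (mul_pos (by linarith : 0 < t) (by linarith : 0 < t))
        (by linarith : 0 < -s), one_lt_pow₀ ht (n := 3) (by norm_num)]
    have hs2 : 0 < s ^ 2 := sq_pos_of_neg hs0
    have ht2 : 1 < t ^ 2 := one_lt_pow₀ ht two_ne_zero
    have b' : powSum t (k + 1) * t ^ 2 ≤ powSum t k * t ^ 2 + (1 + t) := by
      nlinarith
    have a' : powSum s k * s ^ 2 + (1 + s) ≤ powSum s (k + 1) * s ^ 2 := by nlinarith
    have hp : 0 < s ^ 2 * t ^ 2 := by positivity
    have h1 : 0 < 1 + s := by linarith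
    refine le_of_mul_le_mul_left (a := s ^ 2 * t ^ 2) ?_ hp
    calc s ^ 2 * t ^ 2 * ((1 + s) * t * powSum t (k + 1))
        = (s ^ 2 * (1 + s) * t) * (powSum t (k + 1) * t ^ 2) := by ring
      _ ≤ (s ^ 2 * (1 + s) * t) * (powSum t k * t ^ 2 + (1 + t)) := by gcongr
      _ = s ^ 2 * t ^ 2 * ((1 + s) * t * powSum t k) + (1 + s) * t * (s ^ 2 * (1 + t)) := by ring
      _ ≤ s ^ 2 * t ^ 2 * ((t - s) ^ 2 * powSum s k) + (1 + s) * t * (t * (t - s) ^ 2) := by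
        gcongr
      _ = t ^ 2 * (t - s) ^ 2 * (powSum s k * s ^ 2 + (1 + s)) := by ring
      _ ≤ t ^ 2 * (t - s) ^ 2 * (powSum s (k + 1) * s ^ 2) := by gcongr
      _ = s ^ 2 * t ^ 2 * ((t - s) ^ 2 * powSum s (k + 1)) := by ring

/-- Each term subtracted in the sublinear rate is at most one. -/
lemma mul_max_sub_powSum_le (hs1 : s < 1) (ht : 1 < t) (k : ℕ) :
    (1 - s) * (t - 1) / (t - s) * max (powSum t k - powSum s k) 0 ≤ 1 := by
  have hts : 0 < t - s := by linarith
  rcases le_total (powSum t k - powSum s k) 0 with h | h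
  · simp [max_eq_right h]
  rw [max_eq_left h, div_mul_eq_mul_div, div_le_one hts]
  have h1 : (1 - s) * powSum s k = -1 + s ^ (-(2 * (k : ℤ))) := by
    rw [powSum]
    have : 1 - s ≠ 0 := by linarith
    field_simp
  have h2 : (1 - t) * powSum t k = -1 + t ^ (-(2 * (k : ℤ))) := by
    rw [powSum]
    have : 1 - t ≠ 0 := by linarith
    field_simp
  have p1 : 0 ≤ s ^ (-(2 * (k : ℤ))) := (even_two_mul _).neg.zpow_nonneg s
  have p2 : 0 ≤ t ^ (-(2 * (k : ℤ))) := (even_two_mul _).neg.zpow_nonneg t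
  nlinarith

/-- The sublinear rate telescopes into a combination of the two power sums. -/
lemma rate_telescope (hs : -1 < s) (hs0 : s < 0) (ht : 1 < t) (K : ℕ) :
    (1 + s) * (1 + t) / (s + t) * ((K : ℝ) - (1 - s) * (t - 1) / (t - s) *
        ∑ k ∈ Finset.range (K + 1), (powSum t k - powSum s k))
      = powSum s K + (1 - s ^ 2) / (s + t) * ((t - s)⁻¹ * (powSum t K - powSum s K)) := by
  have hts : t - s ≠ 0 := by linarith
  have hst : s + t ≠ 0 := by linarith
  induction K with
  | zero => simp
  | succ K ih =>
    have h := powSum_succ hs0.ne (by linarith) K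
    have h' := powSum_succ (by positivity) ht.ne' K (s := t)
    rw [Finset.sum_range_succ]
    have e1 : powSum s K = s ^ 2 * powSum s (K + 1) - 1 - s := by linarith
    have e2 : powSum t K = t ^ 2 * powSum t (K + 1) - 1 - t := by linarith
    rw [e1, e2] at ih
    have : (1 + s) * (1 + t) / (s + t) *
        (1 - (1 - s) * (t - 1) / (t - s) * (powSum t (K + 1) - powSum s (K + 1)))
      = powSum s (K + 1) - (s ^ 2 * powSum s (K + 1) - 1 - s) + (1 - s ^ 2) / (s + t) *
        ((t - s)⁻¹ * (powSum t (K + 1) - powSum s (K + 1) -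
          (t ^ 2 * powSum t (K + 1) - 1 - t - (s ^ 2 * powSum s (K + 1) - 1 - s)))) := by
      field_simp
      ring
    push_cast
    linear_combination ih + this

end PowerSums

section Descent

variable {E : Type*} [NormedAddCommGroup E] [InnerProductSpace ℝ E]

/-- The consequences of interpolation for a gradient descent trajectory with function values `F`
and gradients `g`, both scaled by the stepsize, where `s = 1 - γL` and `t = 1 - γμ`: decrease over
one step, and cocoercivity between iterates at distance one and two. -/
structure StepInequalities (N : ℕ) (F : ℕ → ℝ) (g : ℕ → E) (s t : ℝ) : Prop where
  decrease : ∀ k < N, (1 + s) / 2 * ‖g k‖ ^ 2 + (t - s)⁻¹ / 2 * ‖g (k + 1) - s • g k‖ ^ 2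
    ≤ F k - F (k + 1)
  adjacent : ∀ k < N, -⟪g k, g (k + 1) - s • g k⟫_ℝ
    + (t - s)⁻¹ * ‖g (k + 1) - s • g k‖ ^ 2 ≤ 0
  two_apart : ∀ k, k + 1 < N → -⟪g k + g (k + 1), (g (k + 1) - s • g k)
      + (g (k + 2) - s • g (k + 1))⟫_ℝ
    + (t - s)⁻¹ * ‖(g (k + 1) - s • g k) + (g (k + 2) - s • g (k + 1))‖ ^ 2 ≤ 0

variable {N : ℕ} {F : ℕ → ℝ} {g : ℕ → E} {s t m : ℝ}

/-- Short steps: a fixed decrease per iteration. -/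
lemma descent_short (hs0 : 0 < s) (hs1 : s < 1) (ht : 1 < t)
    (H : StepInequalities N F g s t)
    (hm : ∀ k ≤ N, m ≤ ‖g k‖ ^ 2) (n : ℕ) (hn : n ≤ N) :
    1 / 2 * ((1 + s + (t - s)⁻¹ * (1 - s) ^ 2) * n) * m ≤ F 0 - F n := by
  induction n with
  | zero => simp
  | succ n ih =>
    have h1 := ih (by omega)
    have h2 := H.decrease n (by omega)
    have m1 := hm n (by omega)
    have m2 := hm (n + 1) hn
    have hc : 0 < (t - s)⁻¹ := inv_pos.2 (by linarith)
    have hcc : (t - s)⁻¹ * (t - s) = 1 := inv_mul_cancel₀ (by linarith)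
    generalize (t - s)⁻¹ = c at *
    have hd : ‖g (n + 1) - s • g n‖ ^ 2
        = (1 - s) * ‖g (n + 1)‖ ^ 2 - s * (1 - s) * ‖g n‖ ^ 2 + s * ‖g (n + 1) - g n‖ ^ 2 := by
      simp only [norm_sub_sq_real, real_inner_smul_right, norm_smul, mul_pow, Real.norm_eq_abs,
        sq_abs]
      ring
    rw [hd] at h2
    have w1 : 0 ≤ c * (1 - s) := mul_nonneg hc.le (by linarith)
    have w0 : 0 ≤ 1 + s - c * (1 - s) * s := by
      have : 1 + s - c * (1 - s) * s = c * ((t - s) * (1 + s) - (1 - s) * s) := by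
        linear_combination -(1 + s) * hcc
      rw [this]
      apply mul_nonneg hc.le
      nlinarith
    push_cast
    linear_combination h1 + h2 + 1 / 2 * mul_le_mul_of_nonneg_left m2 w1
      + 1 / 2 * mul_le_mul_of_nonneg_left m1 w0
      + c / 2 * s * sq_nonneg ‖g (n + 1) - g n‖

/-- The decrease kept by long steps while the lower-curvature power sums dominate. -/
lemma descent_long_step (hs : -1 < s) (hs0 : s < 0) (ht : 1 < t)
    (H : StepInequalities N F g s t)
    (k : ℕ) (hk : k < N) (hT : ∀ j ≤ k, powSum s j ≤ powSum t j) :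
    (powSum s k + 1 + s) / 2 * ‖g k‖ ^ 2
      + (t - s)⁻¹ / 2 * (1 + (t - s)⁻¹ * (powSum t k - powSum s k)) * ‖g (k + 1) - s • g k‖ ^ 2
      - (1 + s) * t * (t - s)⁻¹ * ((t - s)⁻¹ * (powSum t k - powSum s k)) *
        (-⟪g k, g (k + 1) - s • g k⟫_ℝ + (t - s)⁻¹ * ‖g (k + 1) - s • g k‖ ^ 2)
      ≤ F 0 - F (k + 1) := by
  have hc : 0 < (t - s)⁻¹ := inv_pos.2 (by linarith)
  have hcc : (t - s)⁻¹ * (t - s) = 1 := inv_mul_cancel₀ (by linarith)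
  induction k with
  | zero =>
    have := H.decrease 0 hk
    simp
    linarith
  | succ k ih =>
    have hJ := ih (by omega) (fun j hj => hT j (by omega))
    have hA := H.decrease (k + 1) hk
    have hC := H.adjacent k (by omega)
    have hG := H.two_apart k hk
    have hTk := hT (k + 1) le_rfl
    have hTk0 := hT k (by omega)
    have hcmp := mul_powSum_le_of_neg hs hs0 ht (k + 1)
    have he := powSum_succ hs0.ne (by linarith) k
    have ht' := powSum_succ (by positivity) ht.ne' k (s := t)
    have hnn := powSum_nonneg hs0.ne (by linarith) hs (k + 1)
    generalize (t - s)⁻¹ = c at *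
    obtain ⟨d, hd⟩ : ∃ d, d = g (k + 1) - s • g k := ⟨_, rfl⟩
    obtain ⟨d', hd'⟩ : ∃ d', d' = g (k + 1 + 1) - s • g (k + 1) := ⟨_, rfl⟩
    have hg : g (k + 1) = s • g k + d := by rw [hd]; abel
    rw [← hd'] at hA hG ⊢
    rw [← hd] at hJ hC hG
    rw [hg] at hA hG ⊢
    obtain ⟨r', hr'⟩ : ∃ r', r' = c * (powSum t (k + 1) - powSum s (k + 1)) := ⟨_, rfl⟩
    have hr0' : 0 ≤ r' := by rw [hr']; exact mul_nonneg hc.le (by linarith)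
    have hr : c * (powSum t k - powSum s k)
        = t ^ 2 * r' - 1 + powSum s (k + 1) * (s + t) := by
      rw [hr']
      linear_combination c * he - c * ht' + (powSum s (k + 1) * (s + t) - 1) * hcc
    have hr0 : 0 ≤ c * (powSum t k - powSum s k) := mul_nonneg hc.le (by linarith)
    have hcoef : 0 ≤ -s * powSum s (k + 1) + (1 + s) * s * t * c * r' := by
      have h1 : c ^ 2 * ((1 + s) * t * powSum t (k + 1)) ≤ powSum s (k + 1) := by
        calc _ ≤ c ^ 2 * ((t - s) ^ 2 * powSum s (k + 1)) := by gcongr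
          _ = (c * (t - s)) ^ 2 * powSum s (k + 1) := by ring
          _ = _ := by rw [hcc]; ring
      have h2 : 0 ≤ c ^ 2 * ((1 + s) * t) * powSum s (k + 1) := by
        have : 0 < 1 + s := by linarith
        positivity
      rw [hr']
      nlinarith
    have hslack : 0 ≤ c / 2 * c * r' * (t + s) * ‖t • d - d'‖ ^ 2 := by
      have : 0 < t + s := by linarith
      positivity
    rw [← hr']
    rw [hr] at hJ hr0
    have p1 := mul_nonneg (mul_nonneg (mul_nonneg (by linarith : 0 ≤ 1 + s) (by linarith : 0 ≤ t))
      hc.le) hr0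
    have q1 := mul_nonpos_of_nonneg_of_nonpos hcoef hC
    have q2 := mul_nonpos_of_nonneg_of_nonpos
      (mul_nonneg (mul_nonneg (mul_nonneg (by linarith : 0 ≤ -s) (by linarith : 0 ≤ t)) hc.le) hr0')
      hG
    have q3 := mul_nonpos_of_nonneg_of_nonpos p1 hC
    have hid := one_step_identity (e' := powSum s (k + 1)) (r' := r') (a11 := ‖g k‖ ^ 2)
      (a12 := ⟪g k, d⟫_ℝ) (a13 := ⟪g k, d'⟫_ℝ) (a22 := ‖d‖ ^ 2) (a23 := ⟪d, d'⟫_ℝ)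
      (a33 := ‖d'‖ ^ 2) hcc
    simp only [norm_sub_sq_real, norm_add_sq_real, inner_add_left, inner_add_right,
      real_inner_smul_left, norm_smul, mul_pow, Real.norm_eq_abs, sq_abs,
      real_inner_self_eq_norm_sq] at hA hG hslack hJ hC q1 q2 q3 ⊢
    have e0 : powSum s k = s ^ 2 * powSum s (k + 1) - 1 - s := by linarith
    rw [e0] at hJ
    linear_combination hJ + hA + q1 + q2 + q3 + hslack - hid

/-- Long steps, all lower-curvature power sums dominating: the linear rate. -/
lemma descent_long_linear (hs : -1 < s) (hs0 : s < 0) (ht : 1 < t) (H : StepInequalities N F g s t)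
    (hN : 1 ≤ N) (hT : ∀ j ≤ N, powSum s j ≤ powSum t j) :
    1 / 2 * powSum s N * ‖g N‖ ^ 2 ≤ F 0 - F N := by
  obtain ⟨k, rfl⟩ : ∃ k, N = k + 1 := ⟨N - 1, by omega⟩
  have hJ := descent_long_step hs hs0 ht H k (by omega) (fun j hj => hT j (by omega))
  have hC := H.adjacent k (by omega)
  have hTk := hT (k + 1) le_rfl
  have hTk0 := hT k (by omega)
  have he := powSum_succ hs0.ne (by linarith) k
  have ht' := powSum_succ (by positivity) ht.ne' k (s := t)
  have hnn := powSum_nonneg hs0.ne (by linarith) hs (k + 1)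
  have hc : 0 < (t - s)⁻¹ := inv_pos.2 (by linarith)
  have hcc : (t - s)⁻¹ * (t - s) = 1 := inv_mul_cancel₀ (by linarith)
  generalize (t - s)⁻¹ = c at *
  obtain ⟨d, hd⟩ : ∃ d, d = g (k + 1) - s • g k := ⟨_, rfl⟩
  have hg : g (k + 1) = s • g k + d := by rw [hd]; abel
  rw [← hd] at hJ hC
  have hcoef : 0 ≤ -s * powSum s (k + 1)
      + (1 + s) * t * c * (c * (powSum t k - powSum s k)) := by
    have h1 : 0 ≤ 1 + s := by linarith
    have h2 : 0 ≤ -s := by linarith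
    have h3 : 0 ≤ powSum t k - powSum s k := by linarith
    positivity
  have q := mul_nonpos_of_nonneg_of_nonpos hcoef hC
  have hslack : 0 ≤ c / 2 * (t ^ 2 * (c * (powSum t (k + 1) - powSum s (k + 1)))) * ‖d‖ ^ 2 := by
    have h3 : 0 ≤ powSum t (k + 1) - powSum s (k + 1) := by linarith
    positivity
  have hR : t ^ 2 * (c * (powSum t (k + 1) - powSum s (k + 1)))
      = 1 - powSum s (k + 1) * (s + t) + c * (powSum t k - powSum s k) := by
    linear_combination c * ht' - c * he + (1 - powSum s (k + 1) * (s + t)) * hcc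
  rw [hR] at hslack
  have hn : ‖g (k + 1)‖ ^ 2 = s ^ 2 * ‖g k‖ ^ 2 + 2 * s * ⟪g k, d⟫_ℝ + ‖d‖ ^ 2 := by
    rw [hg, norm_add_sq_real, real_inner_smul_left, norm_smul, mul_pow, Real.norm_eq_abs, sq_abs]
    ring
  rw [hn]
  linear_combination hJ + q + hslack + 1 / 2 * ‖g k‖ ^ 2 * he
    - powSum s (k + 1) * ‖d‖ ^ 2 * hcc / 2

/-- Long steps from the first index at which the upper-curvature power sum dominates: after
the transition every further iteration decreases the values at the sublinear rate. -/
lemma descent_long_sublinear (hs : -1 < s) (hs0 : s < 0) (ht : 1 < t)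
    (H : StepInequalities N F g s t) (hm : ∀ k ≤ N, m ≤ ‖g k‖ ^ 2) (K : ℕ)
    (hT : ∀ j ≤ K, powSum s j ≤ powSum t j) (hT' : powSum t (K + 1) ≤ powSum s (K + 1))
    (n : ℕ) (hKn : K + 1 ≤ n) (hn : n ≤ N) :
    1 / 2 * (powSum s K + (1 - s ^ 2) / (s + t) * ((t - s)⁻¹ * (powSum t K - powSum s K))
        + (1 + s) * (1 + t) / (s + t) * (n - K) - 1 / (s + t)) * m
      + 1 / 2 * (1 / (s + t)) * ‖g n‖ ^ 2 ≤ F 0 - F n := by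
  have hst : 0 < s + t := by linarith
  have ha : 0 < 1 / (s + t) := by positivity
  have haa : 1 / (s + t) * (s + t) = 1 := by field_simp
  rw [div_eq_mul_one_div (1 - s ^ 2), div_eq_mul_one_div ((1 + s) * (1 + t))]
  have hc : 0 < (t - s)⁻¹ := inv_pos.2 (by linarith)
  have hcc : (t - s)⁻¹ * (t - s) = 1 := inv_mul_cancel₀ (by linarith)
  induction n, hKn using Nat.le_induction with
  | base =>
    have hJ := descent_long_step hs hs0 ht H K (by omega) hT
    have hC := H.adjacent K (by omega)
    have hTK := hT K le_rfl
    have he := powSum_succ hs0.ne (by linarith) K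
    have ht' := powSum_succ (by positivity) ht.ne' K (s := t)
    have m1 := hm K (by omega)
    have m2 := hm (K + 1) hn
    generalize 1 / (s + t) = a at *
    generalize (t - s)⁻¹ = c at *
    obtain ⟨d, hd⟩ : ∃ d, d = g (K + 1) - s • g K := ⟨_, rfl⟩
    have hg : g (K + 1) = s • g K + d := by rw [hd]; abel
    rw [← hd] at hJ hC
    obtain ⟨r, hr⟩ : ∃ r, r = c * (powSum t K - powSum s K) := ⟨_, rfl⟩
    have hr0 : 0 ≤ r := by rw [hr]; exact mul_nonneg hc.le (by linarith)
    rw [← hr] at hJ ⊢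
    have hcoef : 0 ≤ -s * (1 + r) * a + (1 + s) * t * c * r := by
      have h1 : 0 ≤ 1 + s := by linarith
      have h2 : 0 ≤ -s := by linarith
      positivity
    have q := mul_nonpos_of_nonneg_of_nonpos hcoef hC
    have hn : ‖g (K + 1)‖ ^ 2 = s ^ 2 * ‖g K‖ ^ 2 + 2 * s * ⟪g K, d⟫_ℝ + ‖d‖ ^ 2 := by
      rw [hg, norm_add_sq_real, real_inner_smul_left, norm_smul, mul_pow, Real.norm_eq_abs,
        sq_abs]
      ring
    have hR : 1 + r ≤ powSum s (K + 1) * (s + t) := by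
      have h1 : t ^ 2 * (c * (powSum t (K + 1) - powSum s (K + 1)))
          = 1 - powSum s (K + 1) * (s + t) + r := by
        rw [hr]
        linear_combination c * ht' - c * he + (1 - powSum s (K + 1) * (s + t)) * hcc
      have h2 : 0 ≤ t ^ 2 * (c * (powSum s (K + 1) - powSum t (K + 1))) := by
        have h3 : 0 ≤ powSum s (K + 1) - powSum t (K + 1) := by linarith
        positivity
      linarith
    have w0 : 0 ≤ powSum s K + 1 + s - s ^ 2 * a * (1 + r) := by
      have h1 := mul_nonneg (mul_nonneg (sq_nonneg s) ha.le) (sub_nonneg.2 hR)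
      linear_combination h1 + he + s ^ 2 * powSum s (K + 1) * haa
    have w1 : 0 ≤ a * r := by positivity
    have key : (powSum s K + 1 + s - s ^ 2 * a * (1 + r)) / 2 * ‖g K‖ ^ 2
        + a * (1 + r) / 2 * ‖g (K + 1)‖ ^ 2 ≤ F 0 - F (K + 1) := by
      rw [hn]
      linear_combination hJ + q + (1 + r) / 2 * ‖d‖ ^ 2 * (c * haa - a * hcc)
    push_cast
    have u0 := mul_le_mul_of_nonneg_left m1 w0
    have u1 := mul_le_mul_of_nonneg_left m2 w1
    linear_combination key + u0 / 2 + u1 / 2 + (1 + s) / 2 * m * haa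
  | succ n hKn ih =>
    have h1 := ih (by omega)
    have h2 := H.decrease n (by omega)
    have hC := H.adjacent n (by omega)
    have m1 := hm n (by omega)
    generalize 1 / (s + t) = a at *
    generalize (t - s)⁻¹ = c at *
    obtain ⟨d, hd⟩ : ∃ d, d = g (n + 1) - s • g n := ⟨_, rfl⟩
    have hg : g (n + 1) = s • g n + d := by rw [hd]; abel
    rw [← hd] at h2 hC
    have hn : ‖g (n + 1)‖ ^ 2 = s ^ 2 * ‖g n‖ ^ 2 + 2 * s * ⟪g n, d⟫_ℝ + ‖d‖ ^ 2 := by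
      rw [hg, norm_add_sq_real, real_inner_smul_left, norm_smul, mul_pow, Real.norm_eq_abs,
        sq_abs]
      ring
    have q := mul_nonpos_of_nonneg_of_nonpos
      (mul_nonneg (by linarith : 0 ≤ -s) ha.le) hC
    have hp : 0 ≤ (1 + s) * (1 + t) * a := by
      have h1 : 0 ≤ 1 + s := by linarith
      positivity
    have u := mul_le_mul_of_nonneg_left m1 hp
    rw [hn]
    push_cast
    linear_combination h1 + h2 + q + u / 2 + ‖d‖ ^ 2 / 2 * (c * haa - a * hcc)
      + (1 + s) / 2 * ‖g n‖ ^ 2 * haa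

/-- The decrease guaranteed in every regime, in terms of the scaled quantities. -/
lemma descent_rate (hs : -1 < s) (hs0 : s ≠ 0) (hs1 : s < 1) (ht : 1 < t)
    (H : StepInequalities N F g s t) (hN : 1 ≤ N) (hm0 : 0 ≤ m) (hm : ∀ k ≤ N, m ≤ ‖g k‖ ^ 2) :
    1 / 2 * min (pcoef (1 - s) (1 - t) * (N - (1 - s) * (t - 1) / (t - s) *
        ∑ k ∈ Finset.range (N + 1), max (powSum t k - powSum s k) 0)) (powSum s N) * m
      ≤ F 0 - F N := by
  have hts : 0 < t - s := by linarith
  rcases hs0.lt_or_gt with hneg | hpos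
  · have hst : 0 < s + t := by linarith
    have hp : pcoef (1 - s) (1 - t) = (1 + s) * (1 + t) / (s + t) := by
      have h1 : 1 - (1 - t) - |1 - (1 - s)| = s + t := by
        rw [sub_sub_cancel 1 s, abs_of_neg hneg]; ring
      rw [pcoef, h1]
      field_simp
      ring
    by_cases hT : ∀ j ≤ N, powSum s j ≤ powSum t j
    · refine le_trans ?_ (descent_long_linear hs hneg ht H hN hT)
      have hE := powSum_nonneg hs0 hs1.ne hs N
      have := hm N le_rfl
      gcongr
      exact min_le_right _ _
    · push Not at hT
      classical
      obtain ⟨hjN, hj⟩ := Nat.find_spec hT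
      have hmin : ∀ j < Nat.find hT, powSum s j ≤ powSum t j := by
        intro j hjlt
        by_contra! h
        exact Nat.find_min hT hjlt ⟨by omega, h⟩
      generalize Nat.find hT = j at *
      obtain ⟨K, rfl⟩ : ∃ K, j = K + 1 := by
        refine ⟨j - 1, ?_⟩
        rcases j with _ | j
        · simp at hj
        · simp
      have hD := descent_long_sublinear hs hneg ht H hm K
        (fun j hj => hmin j (by omega)) hj.le N hjN le_rfl
      have htel := rate_telescope hs hneg ht K
      have hsum : ∑ k ∈ Finset.range (K + 1), (powSum t k - powSum s k)
          ≤ ∑ k ∈ Finset.range (N + 1), max (powSum t k - powSum s k) 0 :=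
        calc _ ≤ ∑ k ∈ Finset.range (K + 1), max (powSum t k - powSum s k) 0 :=
              Finset.sum_le_sum fun _ _ => le_max_left _ _
          _ ≤ _ := Finset.sum_le_sum_of_subset_of_nonneg
              (Finset.range_mono (by omega)) fun _ _ _ => le_max_right _ _
      have hθ : 0 ≤ (1 - s) * (t - 1) / (t - s) := by
        have h1 : 0 ≤ 1 - s := by linarith
        have h2 : 0 ≤ t - 1 := by linarith
        positivity
      have hp0 : 0 ≤ (1 + s) * (1 + t) / (s + t) := by
        have h1 : 0 ≤ 1 + s := by linarith
        positivity
      rw [hp]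
      have hP : (1 + s) * (1 + t) / (s + t) * (N - (1 - s) * (t - 1) / (t - s) *
            ∑ k ∈ Finset.range (N + 1), max (powSum t k - powSum s k) 0)
          ≤ powSum s K + (1 - s ^ 2) / (s + t) * ((t - s)⁻¹ * (powSum t K - powSum s K))
            + (1 + s) * (1 + t) / (s + t) * (N - K) := by
        rw [← htel, ← mul_add]
        refine mul_le_mul_of_nonneg_left ?_ hp0
        have := mul_le_mul_of_nonneg_left hsum hθ
        linarith
      have hle := mul_le_mul_of_nonneg_right ((min_le_left _ (powSum s N)).trans hP) hm0
      have hmN := mul_le_mul_of_nonneg_left (hm N le_rfl) (by positivity : 0 ≤ 1 / (s + t))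
      linear_combination hD + hle / 2 + hmN / 2
  · have hp : pcoef (1 - s) (1 - t) = 1 + s + (t - s)⁻¹ * (1 - s) ^ 2 := by
      have h1 : 1 - (1 - t) - |1 - (1 - s)| = t - s := by
        rw [sub_sub_cancel 1 s, abs_of_pos hpos]; ring
      rw [pcoef, h1]
      field_simp
      ring
    have hsum : ∑ k ∈ Finset.range (N + 1), max (powSum t k - powSum s k) 0 = 0 :=
      Finset.sum_eq_zero fun k _ =>
        max_eq_right (sub_nonpos.2 (powSum_mono_of_pos hpos hs1 ht k))
    rw [hsum, hp, mul_zero, sub_zero]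
    refine le_trans ?_ (descent_short hpos hs1 ht H hm N le_rfl)
    gcongr
    exact min_le_left _ _

/-- The sublinear rate is nonnegative. -/
lemma rate_nonneg (hs : -1 < s) (hs1 : s < 1) (ht : 1 < t) (N : ℕ) :
    0 ≤ pcoef (1 - s) (1 - t) * (N - (1 - s) * (t - 1) / (t - s) *
        ∑ k ∈ Finset.range (N + 1), max (powSum t k - powSum s k) 0) := by
  refine mul_nonneg ?_ ?_
  · have hs' : |s| < 1 := abs_lt.2 ⟨hs, hs1⟩
    rw [pcoef, sub_sub_cancel, sub_sub_cancel, sub_nonneg, div_le_iff₀ (by linarith)]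
    nlinarith [le_abs_self s, neg_abs_le s]
  · rw [Finset.sum_range_succ', powSum_zero, powSum_zero, sub_self, max_self, add_zero,
      Finset.mul_sum, sub_nonneg]
    calc _ ≤ ∑ _k ∈ Finset.range N, (1 : ℝ) :=
          Finset.sum_le_sum fun k _ => mul_max_sub_powSum_le hs1 ht (k + 1)
      _ = N := by simp

end Descent

/-- **Exact worst-case rate of gradient descent on smooth nonconvex functions with
constant stepsize (Theorem 3 / `thm:wc_GM_hypo_ct_all`).**
Let `L > 0`, `μ < 0`, `f ∈ F_{μ,L}` bounded below, and run `N ≥ 1` steps with constant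
stepsize `γ`, `0 < γL < 2`, `γL ≠ 1`. With
`P_N(γL,γμ) = p(γL,γμ)·(N − (−γLγμ/(γL−γμ))·Σ_{k=0}^N [ (−1+(1−γμ)^{−2k})/(γμ) −
(−1+(1−γL)^{−2k})/(γL) ]₊)`, the minimum squared gradient norm over the iterates obeys
`(1/(2L))·min_i ‖∇f(x_i)‖² ≤ (f(x₀)−f_*)/(1 + γL·min{P_N, (−1+(1−γL)^{−2N})/(γL)})`. -/
theorem gd_nonconvex_rate_constant_stepsize
    {E : Type*} [NormedAddCommGroup E] [InnerProductSpace ℝ E] [CompleteSpace E]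
    (L μ : ℝ) (hL : 0 < L) (hμ : μ < 0)
    (f : E → ℝ) (hdiff : Differentiable ℝ f)
    (hsmooth : ConvexOn ℝ Set.univ (fun z => L / 2 * ‖z‖ ^ 2 - f z))
    (hcurv : ConvexOn ℝ Set.univ (fun z => f z - μ / 2 * ‖z‖ ^ 2))
    (hbdd : BddBelow (Set.range f))
    (N : ℕ) (hN : 1 ≤ N)
    (γ : ℝ) (hγ : 0 < γ) (hγL : γ * L < 2) (hγL1 : γ * L ≠ 1)
    (x : ℕ → E) (hx : ∀ i < N, x (i + 1) = x i - γ • gradient f (x i))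
    (PN : ℝ)
    (hPN : PN = pcoef (γ * L) (γ * μ) *
      ((N : ℝ) - (-(γ * L) * (γ * μ) / (γ * L - γ * μ)) *
        ∑ k ∈ Finset.range (N + 1),
          max ((-1 + (1 - γ * μ) ^ (-(2 * (k : ℤ)))) / (γ * μ) -
               (-1 + (1 - γ * L) ^ (-(2 * (k : ℤ)))) / (γ * L)) 0)) :
    1 / (2 * L) * (⨅ i : Fin (N + 1), ‖gradient f (x i)‖ ^ 2) ≤
      (f (x 0) - ⨅ y, f y) /
        (1 + γ * L *
          min PN ((-1 + (1 - γ * L) ^ (-(2 * (N : ℤ)))) / (γ * L))) := by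
  have hL' : 0 < γ * L := by positivity
  have hμ' : γ * μ < 0 := mul_neg_of_pos_of_neg hγ hμ
  have hlo : ∀ y z, f y + ⟪gradient f y, z - y⟫_ℝ + μ / 2 * ‖z - y‖ ^ 2 ≤ f z := by
    intro y z
    have := quadratic_lower_model (a := -μ) hdiff
      (by simpa only [neg_div, neg_mul, ← sub_eq_add_neg] using hcurv) y z
    linarith
  have hup : ∀ y z, f z ≤ f y + ⟪gradient f y, z - y⟫_ℝ + L / 2 * ‖z - y‖ ^ 2 := by
    intro y z
    have := quadratic_lower_model (f := fun w => -f w) (a := L) hdiff.neg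
      (by simpa only [neg_add_eq_sub] using hsmooth) y z
    have hg : gradient (fun w => -f w) y = -gradient f y := by
      have h := (hdiff y).hasGradientAt.hasFDerivAt.neg
      rw [← map_neg] at h
      exact (hasGradientAt_iff_hasFDerivAt.2 h).gradient
    rw [hg, inner_neg_left] at this
    linarith
  have hint := interpolation_of_quadratic_models (by linarith : μ < L) hup hlo
  obtain ⟨s, hs⟩ : ∃ s, s = 1 - γ * L := ⟨_, rfl⟩
  obtain ⟨t, ht⟩ : ∃ t, t = 1 - γ * μ := ⟨_, rfl⟩
  have hl : γ * L = 1 - s := by linarith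
  have hu : γ * μ = 1 - t := by linarith
  have hs0 : s ≠ 0 := by
    rintro rfl
    exact hγL1 (by linarith)
  have hts : t - s = γ * (L - μ) := by rw [hs, ht]; ring
  have hint' : ∀ i j, ⟪γ • gradient f (x i), x i - x j⟫_ℝ - (1 - s) / 2 * ‖x i - x j‖ ^ 2
      + (t - s)⁻¹ / 2 * ‖(γ • gradient f (x i) - γ • gradient f (x j))
        - (1 - s) • (x i - x j)‖ ^ 2 ≤ γ * f (x i) - γ * f (x j) := by
    intro i j
    have h := mul_le_mul_of_nonneg_left (hint (x i) (x j)) hγ.le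
    have e : (γ • gradient f (x i) - γ • gradient f (x j)) - (1 - s) • (x i - x j)
        = γ • ((gradient f (x i) - gradient f (x j)) - L • (x i - x j)) := by
      rw [← hl, mul_smul, smul_sub γ, smul_sub γ]
    have e' : (t - s)⁻¹ * γ ^ 2 = γ * (L - μ)⁻¹ := by
      rw [hts]
      have : L - μ ≠ 0 := by linarith
      field_simp
    rw [e, norm_smul, mul_pow, Real.norm_eq_abs, sq_abs, real_inner_smul_left, ← hl]
    linear_combination h + ‖(gradient f (x i) - gradient f (x j)) - L • (x i - x j)‖ ^ 2 / 2 * e'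
  have H : StepInequalities N (fun i => γ * f (x i)) (fun i => γ • gradient f (x i)) s t := by
    have hx1 : ∀ k < N, x k - x (k + 1) = γ • gradient f (x k) := fun k hk => by
      rw [hx k hk]; abel
    obtain ⟨G, hG⟩ : ∃ G : ℕ → E, G = fun i => γ • gradient f (x i) := ⟨_, rfl⟩
    have hGi : ∀ i, γ • gradient f (x i) = G i := fun i => by rw [hG]
    rw [← hG]
    simp only [hGi] at hint' hx1
    have hcoco : ∀ i j, ⟪(G i - G j) - (1 - s) • (x i - x j), x i - x j⟫_ℝ
        + (t - s)⁻¹ * ‖(G i - G j) - (1 - s) • (x i - x j)‖ ^ 2 ≤ 0 := fun i j => by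
      have h := hint' i j
      have h' := hint' j i
      have e : (G j - G i) - (1 - s) • (x j - x i)
          = -((G i - G j) - (1 - s) • (x i - x j)) := by
        rw [← neg_sub (x i) (x j), smul_neg]
        abel
      rw [e, norm_neg, ← neg_sub (x i) (x j), norm_neg, inner_neg_right] at h'
      rw [inner_sub_left, inner_sub_left, real_inner_smul_left, real_inner_self_eq_norm_sq]
      linarith
    refine ⟨fun k hk => ?_, fun k hk => ?_, fun k hk => ?_⟩
    · have h := hint' k (k + 1)
      rw [hx1 k hk, real_inner_self_eq_norm_sq, show G k - G (k + 1) - (1 - s) • G k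
        = -(G (k + 1) - s • G k) by rw [sub_smul, one_smul]; abel, norm_neg] at h
      linarith
    · have h := hcoco k (k + 1)
      rwa [hx1 k hk, show G k - G (k + 1) - (1 - s) • G k
        = -(G (k + 1) - s • G k) by rw [sub_smul, one_smul]; abel, norm_neg, inner_neg_left,
        real_inner_comm] at h
    · have h := hcoco k (k + 2)
      rwa [← sub_add_sub_cancel (x k) (x (k + 1)) (x (k + 2)), hx1 k (by omega), hx1 (k + 1) hk,
        show G k - G (k + 2) - (1 - s) • (G k + G (k + 1))
          = -((G (k + 1) - s • G k) + (G (k + 2) - s • G (k + 1))) by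
            rw [sub_smul, one_smul, smul_add]; abel,
        norm_neg, inner_neg_left, real_inner_comm] at h
  obtain ⟨m, hm⟩ : ∃ m, m = ⨅ i : Fin (N + 1), ‖gradient f (x i)‖ ^ 2 := ⟨_, rfl⟩
  have hm0 : 0 ≤ m := hm ▸ Real.iInf_nonneg fun _ => by positivity
  have hmle : ∀ k ≤ N, m ≤ ‖gradient f (x k)‖ ^ 2 := fun k hk =>
    hm ▸ ciInf_le (Set.finite_range _).bddBelow (⟨k, by omega⟩ : Fin (N + 1))
  have hrate := descent_rate (m := γ ^ 2 * m) (by linarith) hs0 (by linarith) (by linarith) H hN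
    (by positivity) (fun k hk => by
      rw [norm_smul, mul_pow, Real.norm_eq_abs, sq_abs]
      exact mul_le_mul_of_nonneg_left (hmle k hk) (sq_nonneg γ))
  have hPN' : PN = pcoef (1 - s) (1 - t) * (N - (1 - s) * (t - 1) / (t - s) *
      ∑ k ∈ Finset.range (N + 1), max (powSum t k - powSum s k) 0) := by
    rw [hPN, hl, hu, show -(1 - s) * (1 - t) / (1 - s - (1 - t)) = (1 - s) * (t - 1) / (t - s) by
      congr 1 <;> ring, sub_sub_cancel, sub_sub_cancel]
    rfl
  have hE : (-1 + (1 - γ * L) ^ (-(2 * (N : ℤ)))) / (γ * L) = powSum s N := by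
    rw [hl, sub_sub_cancel]
    rfl
  have hmin : 0 ≤ min PN (powSum s N) :=
    le_min (hPN' ▸ rate_nonneg (by linarith) (by linarith) (by linarith) N)
      (powSum_nonneg hs0 (by linarith) (by linarith) N)
  rw [← hPN'] at hrate
  have hlast : 1 / (2 * L) * ‖gradient f (x N)‖ ^ 2 ≤ f (x N) - ⨅ y, f y := by
    have h1 := hup (x N) (x N - L⁻¹ • gradient f (x N))
    have h2 := ciInf_le hbdd (x N - L⁻¹ • gradient f (x N))
    rw [sub_sub_cancel_left, inner_neg_right, norm_neg, norm_smul, mul_pow, Real.norm_eq_abs,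
      sq_abs, real_inner_smul_right, real_inner_self_eq_norm_sq] at h1
    have e : 1 / (2 * L) = L⁻¹ - L / 2 * L⁻¹ ^ 2 := by
      field_simp
      ring
    rw [e]
    linarith
  have hmN := mul_le_mul_of_nonneg_left (hmle N le_rfl) (by positivity : 0 ≤ 1 / (2 * L))
  have hdesc : 1 / 2 * (γ * min PN (powSum s N)) * m ≤ f (x 0) - f (x N) := by
    refine le_of_mul_le_mul_left (a := γ) ?_ hγ
    linear_combination hrate
  rw [hE, ← hm, le_div_iff₀ (by positivity)]
  have e : 1 / (2 * L) * m * (1 + γ * L * min PN (powSum s N))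
      = 1 / (2 * L) * m + 1 / 2 * (γ * min PN (powSum s N)) * m := by
    field_simp
  rw [e]
  linarith
end

section
/- Fix an integer N ≥ 1 and let γ̄ ∈ (1, 2) be a real number satisfying 2N·γ̄ = −1 + (1 − γ̄)^{−2N}. Then: (i) for every L > 0, every differentiable f : E → ℝ on a real inner product space with f convex and x ↦ (L/2)‖x‖² − f(x) convex (f ∈ F_{0,L}) with f_* := inf f > −∞, gradient descent with constant stepsize γ = γ̄/L satisfies (1/(2L))‖∇f(x_N)‖² ≤ (f(x_0) − f_*)/(1 + 2N·γ̄); and (ii) for every t ∈ (0,2) with t ≠ 1, 1 + t·min{ 2N , (−1 + (1−t)^{−2N})/t } ≤ 1 + 2N·γ̄, i.e. the constant stepsize γ̄ maximizes the denominator of the worst-case bound of the convex rate over all constant stepsizes. -/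
open scoped RealInnerProductSpace

namespace GradientDescent

/-- For `a = γ - 1`, the excess of the linear rate `1 + 2γk` over the geometric rate
`(1 - γ)^{-2k}`. -/
noncomputable def rateGap (a : ℝ) (k : ℕ) : ℝ :=
  1 + 2 * (1 + a) * k - ((a ^ 2)⁻¹) ^ k

/-- The weight of the interpolation inequality between `x_{k-1}` and `x_{k+1}`. -/
noncomputable def skipWeight (a : ℝ) (k : ℕ) : ℝ :=
  rateGap a k / (2 * (1 + a) ^ 2)

/-- The weight of the cocoercivity inequality between `x_k` and `x_{k+1}`. -/
noncomputable def stepWeight (a : ℝ) (k : ℕ) : ℝ :=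
  (1 + 2 * (1 + a) * k + ((a ^ 2)⁻¹) ^ k / a) / (2 * (1 + a))

theorem rateGap_nonneg {a : ℝ} (ha : 0 < a) {N k : ℕ} (hN : rateGap a N = 0) (hk : k ≤ N) :
    0 ≤ rateGap a k := by
  rcases Nat.eq_zero_or_pos N with rfl | hNpos
  · obtain rfl : k = 0 := by lia
    exact hN.ge
  have hb : 0 < (a ^ 2)⁻¹ := by positivity
  have hNr : (0 : ℝ) < N := by exact_mod_cast hNpos
  have hkr : (k : ℝ) ≤ N := by exact_mod_cast hk
  have hconv := (convexOn_rpow_left hb).2 (Set.mem_univ (0 : ℝ)) (Set.mem_univ (N : ℝ))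
    (sub_nonneg.2 ((div_le_one hNr).2 hkr)) (by positivity : 0 ≤ (k : ℝ) / N) (by ring)
  simp only [smul_eq_mul, mul_zero, zero_add, div_mul_cancel₀ _ hNr.ne', Real.rpow_natCast,
    Real.rpow_zero, mul_one] at hconv
  unfold rateGap at hN ⊢
  rw [show ((a ^ 2)⁻¹) ^ N = 1 + 2 * (1 + a) * N by linarith] at hconv
  have hexp : 1 - (k : ℝ) / N + k / N * (1 + 2 * (1 + a) * N) = 1 + 2 * (1 + a) * k := by
    field_simp
    ring
  linarith

theorem skipWeight_nonneg {a : ℝ} (ha : 0 < a) {N k : ℕ} (hN : rateGap a N = 0) (hk : k ≤ N) :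
    0 ≤ skipWeight a k :=
  div_nonneg (rateGap_nonneg ha hN hk) (by positivity)

theorem le_inv_sq_pow {a : ℝ} (ha : 0 < a) (ha1 : a < 1) (k : ℕ) :
    1 + k * ((1 - a) * (1 + a)) ≤ ((a ^ 2)⁻¹) ^ k := by
  have hb : 1 ≤ (a ^ 2)⁻¹ := (one_le_inv₀ (by positivity)).2 (by nlinarith)
  have hbern := one_add_mul_le_pow (a := (a ^ 2)⁻¹ - 1) (by linarith) k
  rw [add_sub_cancel] at hbern
  have hle : (1 - a) * (1 + a) ≤ (a ^ 2)⁻¹ - 1 := by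
    have : (a ^ 2)⁻¹ * a ^ 2 = 1 := inv_mul_cancel₀ (by positivity)
    nlinarith
  nlinarith [mul_le_mul_of_nonneg_left hle (Nat.cast_nonneg (α := ℝ) k)]

theorem forwardWeight_nonneg {a : ℝ} (ha : 0 < a) (ha1 : a < 1) (k : ℕ) :
    0 ≤ 1 + stepWeight a k - skipWeight a k - skipWeight a (k + 1) := by
  have hu := le_inv_sq_pow ha ha1 k
  have hk : (0 : ℝ) ≤ k := Nat.cast_nonneg k
  have hkk : 0 ≤ k * ((1 - a) * (1 + a)) :=
    mul_nonneg hk (mul_nonneg (by linarith) (by linarith))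
  unfold stepWeight skipWeight rateGap
  rw [pow_succ _ k]
  set u := ((a ^ 2)⁻¹) ^ k
  have h1 : u ≤ u / a := by rw [le_div_iff₀ ha]; nlinarith
  have h2 : u ≤ u * (a ^ 2)⁻¹ := by
    rw [← div_eq_mul_inv, le_div_iff₀ (by positivity)]
    exact mul_le_of_le_one_right (by linarith) (by nlinarith)
  have hsum : 0 ≤ 2 * (1 + a) ^ 2 + (1 + a) * (1 + 2 * (1 + a) * k + u / a)
      - (1 + 2 * (1 + a) * k - u) - (1 + 2 * (1 + a) * (k + 1) - u * (a ^ 2)⁻¹) := by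
    nlinarith [mul_nonneg ha.le (show 0 ≤ u / a by positivity)]
  have heq : 1 + (1 + 2 * (1 + a) * k + u / a) / (2 * (1 + a))
      - (1 + 2 * (1 + a) * k - u) / (2 * (1 + a) ^ 2)
      - (1 + 2 * (1 + a) * ((k + 1 : ℕ) : ℝ) - u * (a ^ 2)⁻¹) / (2 * (1 + a) ^ 2)
      = (2 * (1 + a) ^ 2 + (1 + a) * (1 + 2 * (1 + a) * k + u / a)
      - (1 + 2 * (1 + a) * k - u) - (1 + 2 * (1 + a) * (k + 1) - u * (a ^ 2)⁻¹))
        / (2 * (1 + a) ^ 2) := by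
    push_cast
    field_simp
  rw [heq]
  positivity

theorem backwardWeight_nonneg {a : ℝ} (ha : 0 < a) (ha1 : a < 1) (k : ℕ) :
    0 ≤ stepWeight a k - a * skipWeight a k - a * skipWeight a (k + 1) := by
  have hk : (0 : ℝ) ≤ k := Nat.cast_nonneg k
  have hkk : 0 ≤ k * ((1 - a) * (1 + a)) :=
    mul_nonneg hk (mul_nonneg (by linarith) (by linarith))
  have hu : 1 ≤ ((a ^ 2)⁻¹) ^ k := by linarith [le_inv_sq_pow ha ha1 k]
  unfold stepWeight skipWeight rateGap
  rw [pow_succ _ k]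
  set u := ((a ^ 2)⁻¹) ^ k
  have h1 : u ≤ u / a := by rw [le_div_iff₀ ha]; nlinarith
  have hsum : 0 ≤ (1 + 2 * (1 + a) * k) * (1 - a) - 2 * a * (1 + a)
      + u / a + u + a * u + u / a := by
    nlinarith
  have heq : (1 + 2 * (1 + a) * k + u / a) / (2 * (1 + a))
      - a * ((1 + 2 * (1 + a) * k - u) / (2 * (1 + a) ^ 2))
      - a * ((1 + 2 * (1 + a) * ((k + 1 : ℕ) : ℝ) - u * (a ^ 2)⁻¹) / (2 * (1 + a) ^ 2))
      = ((1 + 2 * (1 + a) * k) * (1 - a) - 2 * a * (1 + a) + u / a + u + a * u + u / a)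
        / (2 * (1 + a) ^ 2) := by
    push_cast
    field_simp
    ring
  rw [heq]
  positivity

/-- The gap in the potential inequality after `k + 1` steps of gradient descent, in terms of the
function values `F`, the squared gradient norms `A` and the inner products `B` of consecutive
gradients. -/
noncomputable def potentialGap (a : ℝ) (F A B : ℕ → ℝ) (k : ℕ) : ℝ :=
  F 0 - F (k + 1) - ((1 / 2 + stepWeight a k) * A (k + 1)
    + a * ((1 + a) * skipWeight a (k + 1)) * B k
    + (1 + stepWeight a k - skipWeight a k)
      * (F k - F (k + 1) - (1 + a) * B k - (A k - 2 * B k + A (k + 1)) / 2)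
    + (stepWeight a k - a * skipWeight a k)
      * (F (k + 1) - F k + (1 + a) * A k - (A k - 2 * B k + A (k + 1)) / 2))

theorem potentialGap_zero {a : ℝ} (ha : 0 < a) (F A B : ℕ → ℝ) : potentialGap a F A B 0 = 0 := by
  simp only [potentialGap, stepWeight, skipWeight, rateGap, pow_zero, pow_one, zero_add,
    Nat.cast_zero, Nat.cast_one]
  field_simp
  ring

theorem potentialGap_succ {a : ℝ} (ha : 0 < a) (F A B E : ℕ → ℝ) (k : ℕ) :
    potentialGap a F A B (k + 1) = potentialGap a F A B k
      + (1 + stepWeight a k - skipWeight a k - skipWeight a (k + 1))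
        * (F k - F (k + 1) - (1 + a) * B k - (A k - 2 * B k + A (k + 1)) / 2)
      + (stepWeight a k - a * skipWeight a k - a * skipWeight a (k + 1))
        * (F (k + 1) - F k + (1 + a) * A k - (A k - 2 * B k + A (k + 1)) / 2)
      + skipWeight a (k + 1)
        * (F k - F (k + 2) - (1 + a) * (E k + B (k + 1)) - (A k - 2 * E k + A (k + 2)) / 2)
      + a * skipWeight a (k + 1)
        * (F (k + 2) - F k + (1 + a) * (A k + B k) - (A k - 2 * E k + A (k + 2)) / 2) := by
  have hpow : ((a ^ 2)⁻¹) ^ (k + 2) = ((a ^ 2)⁻¹) ^ k * (a ^ 2)⁻¹ * (a ^ 2)⁻¹ := by ring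
  simp only [potentialGap, stepWeight, skipWeight, rateGap, add_assoc k 1 1, one_add_one_eq_two,
    hpow, pow_succ (a ^ 2)⁻¹ k]
  push_cast
  generalize ((a ^ 2)⁻¹) ^ k = u
  field_simp
  ring

theorem le_sub_of_interpolation {a : ℝ} (ha : 0 < a) (ha1 : a < 1) {N : ℕ} (hN : 1 ≤ N)
    (hgap : rateGap a N = 0) {F A B E : ℕ → ℝ}
    (hfwd : ∀ k, k + 1 ≤ N →
      0 ≤ F k - F (k + 1) - (1 + a) * B k - (A k - 2 * B k + A (k + 1)) / 2)
    (hbwd : ∀ k, k + 1 ≤ N →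
      0 ≤ F (k + 1) - F k + (1 + a) * A k - (A k - 2 * B k + A (k + 1)) / 2)
    (hfwd₂ : ∀ k, k + 2 ≤ N →
      0 ≤ F k - F (k + 2) - (1 + a) * (E k + B (k + 1)) - (A k - 2 * E k + A (k + 2)) / 2)
    (hbwd₂ : ∀ k, k + 2 ≤ N →
      0 ≤ F (k + 2) - F k + (1 + a) * (A k + B k) - (A k - 2 * E k + A (k + 2)) / 2) :
    N * (1 + a) * A N ≤ F 0 - F N := by
  have hpot : ∀ k, k + 1 ≤ N → 0 ≤ potentialGap a F A B k := by
    intro k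
    induction k with
    | zero => exact fun _ => (potentialGap_zero ha F A B).ge
    | succ k ih =>
      intro hk
      have hskip := skipWeight_nonneg ha hgap (k := k + 1) (by lia)
      rw [potentialGap_succ ha F A B E k]
      have h₀ := ih (by lia)
      have h₁ := mul_nonneg (forwardWeight_nonneg ha ha1 k) (hfwd k (by lia))
      have h₂ := mul_nonneg (backwardWeight_nonneg ha ha1 k) (hbwd k (by lia))
      have h₃ := mul_nonneg hskip (hfwd₂ k (by lia))
      have h₄ := mul_nonneg (mul_nonneg ha.le hskip) (hbwd₂ k (by lia))
      linarith
  obtain ⟨n, rfl⟩ : ∃ n, N = n + 1 := ⟨N - 1, by lia⟩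
  have hlast : skipWeight a (n + 1) = 0 := by rw [skipWeight, hgap, zero_div]
  have h₀ := hpot n le_rfl
  have hw₁ := forwardWeight_nonneg ha ha1 n
  have hw₂ := backwardWeight_nonneg ha ha1 n
  rw [hlast, sub_zero] at hw₁
  rw [hlast, mul_zero, sub_zero] at hw₂
  have h₁ := mul_nonneg hw₁ (hfwd n le_rfl)
  have h₂ := mul_nonneg hw₂ (hbwd n le_rfl)
  have hcoef : 1 / 2 + stepWeight a n = ((n + 1 : ℕ) : ℝ) * (1 + a) := by
    have hpow : ((a ^ 2)⁻¹) ^ n = a ^ 2 * (1 + 2 * (1 + a) * ((n + 1 : ℕ) : ℝ)) := by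
      rw [rateGap, pow_succ] at hgap
      have : (a ^ 2)⁻¹ * a ^ 2 = 1 := inv_mul_cancel₀ (by positivity)
      linear_combination (-a ^ 2) * hgap - ((a ^ 2)⁻¹) ^ n * this
    rw [stepWeight, hpow]
    push_cast
    field_simp
    ring
  unfold potentialGap at h₀
  rw [hlast, hcoef] at h₀
  linarith

end GradientDescent

section SmoothConvex

variable {E : Type*} [NormedAddCommGroup E] [InnerProductSpace ℝ E] [CompleteSpace E]

theorem ConvexOn.add_inner_gradient_le {f : E → ℝ} {f' x : E} (hf : ConvexOn ℝ Set.univ f)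
    (hx : HasGradientAt f f' x) (y : E) : f x + ⟪f', y - x⟫ ≤ f y := by
  have hconv : ConvexOn ℝ Set.univ (f ∘ AffineMap.lineMap (k := ℝ) x y) := by
    simpa using hf.comp_affineMap (AffineMap.lineMap (k := ℝ) x y)
  have hder : HasDerivAt (f ∘ AffineMap.lineMap (k := ℝ) x y) ⟪f', y - x⟫ 0 := by
    have hx' : HasFDerivAt f (InnerProductSpace.toDual ℝ E f')
        (AffineMap.lineMap (k := ℝ) x y (0 : ℝ)) := by
      simpa using hx.hasFDerivAt
    simpa using hx'.comp_hasDerivAt (0 : ℝ) AffineMap.hasDerivAt_lineMap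
  have hslope := hconv.le_slope_of_hasDerivAt (Set.mem_univ 0) (Set.mem_univ 1) one_pos hder
  simp [slope_def_field] at hslope
  linarith

/-- The descent lemma: upper curvature bound in first-order form. -/
theorem le_add_inner_gradient_of_convexOn {f : E → ℝ} {f' x : E} {L : ℝ}
    (hf : ConvexOn ℝ Set.univ (fun z => L / 2 * ‖z‖ ^ 2 - f z))
    (hx : HasGradientAt f f' x) (y : E) :
    f y ≤ f x + ⟪f', y - x⟫ + L / 2 * ‖y - x‖ ^ 2 := by
  have hgrad : HasGradientAt (fun z => L / 2 * ‖z‖ ^ 2 - f z) (L • x - f') x := by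
    rw [hasGradientAt_iff_hasFDerivAt]
    have h := (((hasStrictFDerivAt_norm_sq x).hasFDerivAt).const_mul (L / 2)).sub hx.hasFDerivAt
    convert! h using 1
    ext v
    simp
    ring
  have h := hf.add_inner_gradient_le hgrad y
  simp only [inner_sub_left, inner_sub_right, inner_smul_left, real_inner_self_eq_norm_sq] at h ⊢
  rw [norm_sub_sq_real, real_inner_comm x y]
  simp at h
  linarith

theorem smoothConvex_interpolation {f : E → ℝ} {L : ℝ} (hL : 0 < L)
    (hconv : ConvexOn ℝ Set.univ f)
    (hsmooth : ConvexOn ℝ Set.univ (fun z => L / 2 * ‖z‖ ^ 2 - f z)) {x y x' y' : E}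
    (hx : HasGradientAt f x' x) (hy : HasGradientAt f y' y) :
    f y + ⟪y', x - y⟫ + 1 / (2 * L) * ‖x' - y'‖ ^ 2 ≤ f x := by
  set z := x - L⁻¹ • (x' - y') with hz
  have hlow := hconv.add_inner_gradient_le hy z
  have hup := le_add_inner_gradient_of_convexOn hsmooth hx z
  have hzx : z - x = -(L⁻¹ • (x' - y')) := by rw [hz]; abel
  have hzy : z - y = (x - y) - L⁻¹ • (x' - y') := by rw [hz]; abel
  rw [hzx, norm_neg, norm_smul, inner_neg_right, real_inner_smul_right, mul_pow, Real.norm_eq_abs,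
    sq_abs] at hup
  rw [hzy, inner_sub_right, real_inner_smul_right] at hlow
  have hsq : ⟪x', x' - y'⟫ - ⟪y', x' - y'⟫ = ‖x' - y'‖ ^ 2 := by
    rw [← inner_sub_left, real_inner_self_eq_norm_sq]
  have hLsq : L / 2 * (L⁻¹ ^ 2 * ‖x' - y'‖ ^ 2) = 1 / (2 * L) * ‖x' - y'‖ ^ 2 := by field_simp
  have hLone : L⁻¹ * ‖x' - y'‖ ^ 2 = 2 * (1 / (2 * L) * ‖x' - y'‖ ^ 2) := by field_simp
  have hmul : L⁻¹ * ⟪x', x' - y'⟫ - L⁻¹ * ⟪y', x' - y'⟫ = L⁻¹ * ‖x' - y'‖ ^ 2 := by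
    rw [← mul_sub, hsq]
  linarith

theorem iInf_add_norm_gradient_sq_le {f : E → ℝ} {L : ℝ} (hL : 0 < L)
    (hsmooth : ConvexOn ℝ Set.univ (fun z => L / 2 * ‖z‖ ^ 2 - f z))
    (hbdd : BddBelow (Set.range f)) {x x' : E} (hx : HasGradientAt f x' x) :
    (⨅ y, f y) + 1 / (2 * L) * ‖x'‖ ^ 2 ≤ f x := by
  have hinf := ciInf_le hbdd (x - L⁻¹ • x')
  have hup := le_add_inner_gradient_of_convexOn hsmooth hx (x - L⁻¹ • x')
  rw [show x - L⁻¹ • x' - x = -(L⁻¹ • x') by abel, norm_neg, norm_smul, inner_neg_right,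
    real_inner_smul_right, mul_pow, Real.norm_eq_abs, sq_abs, real_inner_self_eq_norm_sq] at hup
  have hLsq : L / 2 * (L⁻¹ ^ 2 * ‖x'‖ ^ 2) = 1 / (2 * L) * ‖x'‖ ^ 2 := by field_simp
  have hLone : L⁻¹ * ‖x'‖ ^ 2 = 2 * (1 / (2 * L) * ‖x'‖ ^ 2) := by field_simp
  linarith

theorem GradientDescent.mul_norm_gradient_sq_le {f : E → ℝ} {L a : ℝ} (hL : 0 < L) (ha : 0 < a)
    (ha1 : a < 1) {N : ℕ} (hN : 1 ≤ N) (hgap : rateGap a N = 0) (hf : Differentiable ℝ f)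
    (hconv : ConvexOn ℝ Set.univ f)
    (hsmooth : ConvexOn ℝ Set.univ (fun z => L / 2 * ‖z‖ ^ 2 - f z)) {x : ℕ → E}
    (hx : ∀ i < N, x (i + 1) = x i - ((1 + a) / L) • gradient f (x i)) :
    N * (1 + a) * ‖gradient f (x N)‖ ^ 2 ≤ L * f (x 0) - L * f (x N) := by
  have hint (i j : ℕ) : 0 ≤ L * f (x i) - L * f (x j) - L * ⟪gradient f (x j), x i - x j⟫
      - (‖gradient f (x i)‖ ^ 2 - 2 * ⟪gradient f (x i), gradient f (x j)⟫
        + ‖gradient f (x j)‖ ^ 2) / 2 := by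
    have h := mul_le_mul_of_nonneg_left (smoothConvex_interpolation hL hconv hsmooth
      (hf (x i)).hasGradientAt (hf (x j)).hasGradientAt) hL.le
    rw [norm_sub_sq_real] at h
    field_simp at h
    linarith
  have hstep (i : ℕ) (hi : i + 1 ≤ N) (v : E) :
      L * ⟪v, x i - x (i + 1)⟫ = (1 + a) * ⟪v, gradient f (x i)⟫ := by
    rw [hx i hi, sub_sub_cancel, real_inner_smul_right]
    field_simp
  have hneg (i j : ℕ) (v : E) : ⟪v, x j - x i⟫ = -⟪v, x i - x j⟫ := by
    rw [← inner_neg_right, neg_sub]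
  have hstep₂ (i : ℕ) (hi : i + 2 ≤ N) (v : E) : L * ⟪v, x i - x (i + 2)⟫
      = (1 + a) * (⟪v, gradient f (x i)⟫ + ⟪v, gradient f (x (i + 1))⟫) := by
    rw [← sub_add_sub_cancel (x i) (x (i + 1)) (x (i + 2)), inner_add_right, mul_add,
      hstep i (by lia), hstep (i + 1) hi, mul_add]
  refine le_sub_of_interpolation ha ha1 hN hgap (F := fun i => L * f (x i))
    (A := fun i => ‖gradient f (x i)‖ ^ 2)
    (B := fun i => ⟪gradient f (x i), gradient f (x (i + 1))⟫)
    (E := fun i => ⟪gradient f (x i), gradient f (x (i + 2))⟫) ?_ ?_ ?_ ?_ <;> intro k hk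
  · have h := hint k (k + 1)
    rw [hstep k hk, real_inner_comm (gradient f (x k))] at h
    exact h
  · have h := hint (k + 1) k
    rw [hneg k (k + 1), mul_neg, hstep k hk, real_inner_self_eq_norm_sq] at h
    linarith [real_inner_comm (gradient f (x k)) (gradient f (x (k + 1)))]
  · have h := hint k (k + 2)
    rw [hstep₂ k hk, real_inner_comm (gradient f (x k)),
      real_inner_comm (gradient f (x (k + 1)))] at h
    exact h
  · have h := hint (k + 2) k
    rw [hneg k (k + 2), mul_neg, hstep₂ k hk, real_inner_self_eq_norm_sq] at h
    linarith [real_inner_comm (gradient f (x k)) (gradient f (x (k + 2)))]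

end SmoothConvex

theorem one_sub_zpow_neg_le_of_le {s t : ℝ} (hs : 1 < s) (hst : s ≤ t) (N : ℕ) :
    (1 - t) ^ (-(2 * (N : ℤ))) ≤ (1 - s) ^ (-(2 * (N : ℤ))) := by
  have key (r : ℝ) : (1 - r) ^ (-(2 * (N : ℤ))) = (((r - 1) ^ 2) ^ N)⁻¹ := by
    rw [zpow_neg, zpow_mul, zpow_natCast, zpow_ofNat, ← neg_sub, neg_sq]
  rw [key, key]
  have : 0 < s - 1 := by linarith
  gcongr

/-- **Optimal constant stepsize for convex functions
(Theorem 6 / `thm:optimal_ct_stepsize_and_rate_convex`).**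
Let `γ̄ ∈ (1,2)` satisfy `2Nγ̄ = −1 + (1−γ̄)^{−2N}` (i.e. `γ̄ = γ̄_N(0)`). Then
(i) for every `f ∈ F_{0,L}` bounded below, `N` steps of gradient descent with constant
stepsize `γ̄/L` give `(1/(2L))‖∇f(x_N)‖² ≤ (f(x₀) − f_*)/(1 + 2Nγ̄)`, and
(ii) `γ̄` maximizes the denominator `1 + t·min{2N, (−1+(1−t)^{−2N})/t}` of the convex
worst-case rate over all normalized constant stepsizes `t ∈ (0,2)`, `t ≠ 1`. -/
theorem gd_convex_optimal_constant_stepsize (N : ℕ) (hN : 1 ≤ N)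
    (γbar : ℝ) (hγbar : γbar ∈ Set.Ioo (1 : ℝ) 2)
    (heq : 2 * N * γbar = -1 + (1 - γbar) ^ (-(2 * (N : ℤ)))) :
    (∀ (E : Type*) [NormedAddCommGroup E] [InnerProductSpace ℝ E] [CompleteSpace E]
      (L : ℝ), 0 < L → ∀ (f : E → ℝ), Differentiable ℝ f →
      ConvexOn ℝ Set.univ f →
      ConvexOn ℝ Set.univ (fun z => L / 2 * ‖z‖ ^ 2 - f z) →
      BddBelow (Set.range f) →
      ∀ (x : ℕ → E), (∀ i < N, x (i + 1) = x i - (γbar / L) • gradient f (x i)) →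
      1 / (2 * L) * ‖gradient f (x N)‖ ^ 2 ≤
        (f (x 0) - ⨅ y, f y) / (1 + 2 * N * γbar)) ∧
    (∀ t : ℝ, t ∈ Set.Ioo (0 : ℝ) 2 → t ≠ 1 →
      1 + t * min (2 * (N : ℝ)) ((-1 + (1 - t) ^ (-(2 * (N : ℤ)))) / t) ≤
        1 + 2 * N * γbar) := by
  set a := γbar - 1 with ha_def
  have ha : 0 < a := by linarith [hγbar.1]
  have ha1 : a < 1 := by linarith [hγbar.2]
  have hγ : γbar = 1 + a := by ring
  have hgap : GradientDescent.rateGap a N = 0 := by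
    rw [hγ, zpow_neg, zpow_mul, zpow_natCast, zpow_ofNat, sub_add_cancel_left, neg_sq,
      ← inv_pow] at heq
    unfold GradientDescent.rateGap
    linarith
  constructor
  · intro E _ _ _ L hL f hf hconv hsmooth hbdd x hx
    rw [hγ] at hx
    have hdesc := GradientDescent.mul_norm_gradient_sq_le hL ha ha1 hN hgap hf hconv hsmooth hx
    have hlast := iInf_add_norm_gradient_sq_le hL hsmooth hbdd (hf (x N)).hasGradientAt
    rw [← mul_sub, ← div_le_iff₀' hL] at hdesc
    rw [hγ, le_div_iff₀ (by positivity)]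
    have hsplit : 1 / (2 * L) * ‖gradient f (x N)‖ ^ 2 * (1 + 2 * N * (1 + a))
        = 1 / (2 * L) * ‖gradient f (x N)‖ ^ 2
          + N * (1 + a) * ‖gradient f (x N)‖ ^ 2 / L := by
      field_simp
    linarith
  · intro t ht _
    rcases le_total t γbar with htγ | htγ
    · have h := mul_le_mul_of_nonneg_left
        (min_le_left (2 * (N : ℝ)) ((-1 + (1 - t) ^ (-(2 * (N : ℤ)))) / t)) ht.1.le
      nlinarith [mul_le_mul_of_nonneg_left htγ (by positivity : 0 ≤ 2 * (N : ℝ))]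
    · have h := mul_le_mul_of_nonneg_left
        (min_le_right (2 * (N : ℝ)) ((-1 + (1 - t) ^ (-(2 * (N : ℤ)))) / t)) ht.1.le
      rw [mul_div_cancel₀ _ ht.1.ne'] at h
      linarith [one_sub_zpow_neg_le_of_le hγbar.1 htγ N]
end

section
/- Let L > 0 and μ < L, set κ := μ/L, and let f : E → ℝ be a differentiable function on a real inner product space E with f ∈ F_{μ,L}. Fix an integer k ≥ 1 and a stepsize γ > 0 with γL ∈ (1, 2/(1 + max{κ,0})) such that T_i(γL, κ) ≥ 0 for all integers 1 ≤ i ≤ k (equivalently, γL ≥ γ̄_k, the k-th stepsize threshold). Let x_0, x_1, …, x_{k+1} be generated by x_{i+1} = x_i − γ∇f(x_i), and write ρ := 1 − γL, η := 1 − γμ (with γμ := γ·μ). Then (f(x_0) − f(x_{k+1}))/γ ≥ E_{k+1}(ρ) · ‖∇f(x_{k+1})‖²/2 + (η²·T_{k+1}(γL,κ)/(η − ρ)²) · ‖∇f(x_{k+1}) − ρ·∇f(x_k)‖²/2. -/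
/-- `E_k(x) := Σ_{j=1}^{2k} x^{−j}` (so `E_0 = 0`). -/
noncomputable def Efun (k : ℕ) (x : ℝ) : ℝ := ∑ j ∈ Finset.Icc 1 (2 * k), x ^ (-(j : ℤ))

/-- `T_k(t, κ) := E_k(1 − κ·t) − E_k(1 − t)`. -/
noncomputable def Tfun (k : ℕ) (t κ : ℝ) : ℝ := Efun k (1 - κ * t) - Efun k (1 - t)

open scoped RealInnerProductSpace

section Interpolation

/-- A convex function lies above its tangent hyperplanes. -/
lemma ConvexOn.add_hasFDerivAt_le {V : Type*} [NormedAddCommGroup V] [NormedSpace ℝ V]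
    {φ : V → ℝ} {φ' : V →L[ℝ] ℝ} {x : V} (hφ : ConvexOn ℝ Set.univ φ)
    (hd : HasFDerivAt φ φ' x) (y : V) : φ x + φ' (y - x) ≤ φ y := by
  have hconv : ConvexOn ℝ Set.univ (φ ∘ AffineMap.lineMap (k := ℝ) x y) :=
    hφ.comp_affineMap (AffineMap.lineMap x y)
  have hline : HasDerivAt (AffineMap.lineMap (k := ℝ) x y) (y - x) 0 :=
    AffineMap.hasDerivAt_lineMap
  have hderiv : HasDerivAt (φ ∘ AffineMap.lineMap (k := ℝ) x y) (φ' (y - x)) 0 :=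
    HasFDerivAt.comp_hasDerivAt (0 : ℝ) (by simpa using hd) hline
  have h := hconv.le_slope_of_hasDerivAt (Set.mem_univ 0) (Set.mem_univ 1) one_pos hderiv
  simp only [slope_def_field, Function.comp_apply, AffineMap.lineMap_apply_one,
    AffineMap.lineMap_apply_zero, sub_zero, div_one] at h
  linarith

variable {E : Type*} [NormedAddCommGroup E] [InnerProductSpace ℝ E] [CompleteSpace E]
  {f : E → ℝ} {L μ : ℝ}

lemma add_inner_gradient_add_le (hdiff : Differentiable ℝ f)
    (hcurv : ConvexOn ℝ Set.univ (fun z => f z - μ / 2 * ‖z‖ ^ 2)) (a z : E) :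
    f a + ⟪gradient f a, z - a⟫ + μ / 2 * ‖z - a‖ ^ 2 ≤ f z := by
  have hf : HasFDerivAt f (fderiv ℝ f a) a := (hdiff a).hasFDerivAt
  have hn : HasFDerivAt (fun z : E => ‖z‖ ^ 2) (2 • innerSL ℝ a) a :=
    (hasStrictFDerivAt_norm_sq a).hasFDerivAt
  have h := hcurv.add_hasFDerivAt_le (hf.sub (hn.const_mul (μ / 2))) z
  simp only [sub_apply, smul_apply, innerSL_apply_apply,
    ← inner_gradient_left, smul_eq_mul, nsmul_eq_mul, Nat.cast_ofNat] at h
  rw [norm_sub_sq_real]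
  rw [inner_sub_right a z a, real_inner_self_eq_norm_sq, real_inner_comm z a] at h
  linarith

lemma le_add_inner_gradient_add (hdiff : Differentiable ℝ f)
    (hsmooth : ConvexOn ℝ Set.univ (fun z => L / 2 * ‖z‖ ^ 2 - f z)) (b z : E) :
    f z ≤ f b + ⟪gradient f b, z - b⟫ + L / 2 * ‖z - b‖ ^ 2 := by
  have hf : HasFDerivAt f (fderiv ℝ f b) b := (hdiff b).hasFDerivAt
  have hn : HasFDerivAt (fun z : E => ‖z‖ ^ 2) (2 • innerSL ℝ b) b :=
    (hasStrictFDerivAt_norm_sq b).hasFDerivAt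
  have h := hsmooth.add_hasFDerivAt_le ((hn.const_mul (L / 2)).sub hf) z
  simp only [sub_apply, smul_apply, innerSL_apply_apply,
    ← inner_gradient_left, smul_eq_mul, nsmul_eq_mul, Nat.cast_ofNat] at h
  rw [norm_sub_sq_real]
  rw [inner_sub_right b z b, real_inner_self_eq_norm_sq, real_inner_comm z b] at h
  linarith

/-- The interpolation inequality of the class `F_{μ,L}`. -/
lemma interpolation_inequality (hμL : μ < L) (hdiff : Differentiable ℝ f)
    (hsmooth : ConvexOn ℝ Set.univ (fun z => L / 2 * ‖z‖ ^ 2 - f z))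
    (hcurv : ConvexOn ℝ Set.univ (fun z => f z - μ / 2 * ‖z‖ ^ 2)) (a b : E) :
    f a ≤ f b + ⟪gradient f b, a - b⟫ + L / 2 * ‖a - b‖ ^ 2 -
      ‖L • (a - b) - (gradient f a - gradient f b)‖ ^ 2 / (2 * (L - μ)) := by
  have hM : L - μ ≠ 0 := by linarith
  set W := L • (a - b) - (gradient f a - gradient f b) with hW
  have hlo := add_inner_gradient_add_le hdiff hcurv a (a - (L - μ)⁻¹ • W)
  have hup := le_add_inner_gradient_add hdiff hsmooth b (a - (L - μ)⁻¹ • W)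
  have hWW : ‖W‖ ^ 2 = L * ⟪a - b, W⟫ - (⟪gradient f a, W⟫ - ⟪gradient f b, W⟫) := by
    rw [← real_inner_self_eq_norm_sq]
    nth_rewrite 1 [hW]
    rw [inner_sub_left, inner_sub_left, real_inner_smul_left]
  rw [show a - (L - μ)⁻¹ • W - a = -((L - μ)⁻¹ • W) by abel, inner_neg_right, norm_neg,
    norm_smul, mul_pow, real_inner_smul_right, Real.norm_eq_abs, sq_abs] at hlo
  rw [show a - (L - μ)⁻¹ • W - b = (a - b) - (L - μ)⁻¹ • W by abel, inner_sub_right,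
    norm_sub_sq_real, norm_smul, mul_pow, real_inner_smul_right, real_inner_smul_right,
    Real.norm_eq_abs, sq_abs] at hup
  have key : ‖W‖ ^ 2 / (2 * (L - μ)) = (L - μ)⁻¹ * ‖W‖ ^ 2 -
      (L - μ) / 2 * ((L - μ)⁻¹ ^ 2 * ‖W‖ ^ 2) := by
    field_simp
    ring
  have hlin : (L - μ)⁻¹ * ‖W‖ ^ 2 = (L - μ)⁻¹ * (L * ⟪a - b, W⟫) -
      ((L - μ)⁻¹ * ⟪gradient f a, W⟫ - (L - μ)⁻¹ * ⟪gradient f b, W⟫) := by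
    rw [hWW]
    ring
  linarith

end Interpolation

section Efun

lemma Efun_eq_mul_sum (n : ℕ) {x : ℝ} (hx : x ≠ 0) :
    Efun n x = (1 + x) * ∑ j ∈ Finset.range n, ((x ^ 2)⁻¹) ^ (j + 1) := by
  induction n with
  | zero => simp [Efun]
  | succ n ih =>
    have hstep : Efun (n + 1) x =
        Efun n x + x ^ (-((2 * n + 1 : ℕ) : ℤ)) + x ^ (-((2 * n + 2 : ℕ) : ℤ)) := by
      simp only [Efun]
      rw [show 2 * (n + 1) = 2 * n + 1 + 1 by ring, Finset.sum_Icc_succ_top (by omega),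
        Finset.sum_Icc_succ_top (by omega)]
    rw [hstep, ih, Finset.sum_range_succ, zpow_neg, zpow_neg, zpow_natCast, zpow_natCast, inv_pow,
      ← pow_mul, show 2 * (n + 1) = 2 * n + 2 by ring]
    field_simp
    ring

lemma sq_mul_Efun_succ (n : ℕ) {x : ℝ} (hx : x ≠ 0) :
    x ^ 2 * Efun (n + 1) x = Efun n x + 1 + x := by
  have hsum : ∑ j ∈ Finset.range n, ((x ^ 2)⁻¹) ^ (j + 1 + 1) =
      (∑ j ∈ Finset.range n, ((x ^ 2)⁻¹) ^ (j + 1)) * (x ^ 2)⁻¹ := by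
    rw [Finset.sum_mul]
    exact Finset.sum_congr rfl fun j _ => pow_succ _ _
  rw [Efun_eq_mul_sum _ hx, Efun_eq_mul_sum _ hx, Finset.sum_range_succ', hsum,
    zero_add, pow_one]
  generalize ∑ j ∈ Finset.range n, ((x ^ 2)⁻¹) ^ (j + 1) = S
  field_simp
  ring

lemma Efun_nonneg (n : ℕ) {x : ℝ} (hx : x ≠ 0) (hx1 : -1 ≤ x) : 0 ≤ Efun n x := by
  rw [Efun_eq_mul_sum _ hx]
  have : 0 ≤ 1 + x := by linarith
  positivity

lemma Efun_zero (x : ℝ) : Efun 0 x = 0 := by simp [Efun]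

lemma sq_mul_Efun_le (n : ℕ) {ρ η : ℝ} (hρ : ρ < 0) (hρ1 : -1 < ρ) (hρη : 0 < η + ρ) :
    η ^ 2 * (1 + ρ) * Efun n η ≤ ρ ^ 2 * (1 + η) * Efun n ρ := by
  have hη : 0 < η := by linarith
  have hρ2 : 0 < ρ ^ 2 := by nlinarith
  have hsq : ρ ^ 2 ≤ η ^ 2 := by nlinarith
  have hsum : η ^ 2 * ∑ j ∈ Finset.range n, ((η ^ 2)⁻¹) ^ (j + 1) ≤
      ρ ^ 2 * ∑ j ∈ Finset.range n, ((ρ ^ 2)⁻¹) ^ (j + 1) := by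
    rw [Finset.mul_sum, Finset.mul_sum]
    refine Finset.sum_le_sum fun j _ => ?_
    rw [pow_succ' (η ^ 2)⁻¹, pow_succ' (ρ ^ 2)⁻¹, mul_inv_cancel_left₀ (by positivity),
      mul_inv_cancel_left₀ hρ2.ne']
    gcongr
  rw [Efun_eq_mul_sum _ hη.ne', Efun_eq_mul_sum _ hρ.ne]
  have h := mul_le_mul_of_nonneg_left hsum
    (mul_nonneg (by linarith : 0 ≤ 1 + ρ) (by linarith : 0 ≤ 1 + η))
  linarith

/-- The multiplier available from one step dominates the one needed at the next step. -/
lemma mul_Efun_sub_le (n : ℕ) {ρ η : ℝ} (hρ : ρ < 0) (hρ1 : -1 < ρ) (hρη : 0 < η + ρ) :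
    η * (1 + ρ) * (Efun n η - Efun n ρ) ≤ (η - ρ) ^ 2 * Efun n ρ := by
  have hη : 0 < η := by linarith
  have h1 := sq_mul_Efun_le n hρ hρ1 hρη
  have h2 : 0 ≤ (η - ρ) * (η ^ 2 + (η + ρ)) * Efun n ρ :=
    mul_nonneg (mul_nonneg (by linarith) (by positivity)) (Efun_nonneg n hρ.ne hρ1.le)
  refine le_of_mul_le_mul_left ?_ hη
  nlinarith

end Efun

section Step

variable {E : Type*} [NormedAddCommGroup E] [InnerProductSpace ℝ E]

/-- The coupling between consecutive steps supplied by cocoercivity at distance two. -/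
lemma three_point_identity {ρ η : ℝ} (hρ : ρ ≠ 0) (hm : η - ρ ≠ 0) (p q r : E) :
    η ^ 2 * ‖q - ρ • p‖ ^ 2 - ‖r - ρ • q‖ ^ 2 =
      (η + ρ) / (η - ρ) * ‖η • (q - ρ • p) - (r - ρ • q)‖ ^ 2 -
      2 * η * ρ * ((⟪(r - ρ • q) + (q - ρ • p), p + q⟫ -
          ‖(r - ρ • q) + (q - ρ • p)‖ ^ 2 / (η - ρ))
        - (1 + ρ) * (⟪q - ρ • p, p⟫ - ‖q - ρ • p‖ ^ 2 / (η - ρ))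
        - (1 + ρ) / ρ * (⟪r - ρ • q, q⟫ - ‖r - ρ • q‖ ^ 2 / (η - ρ))) := by
  simp only [← real_inner_self_eq_norm_sq, inner_sub_left, inner_sub_right, inner_add_left,
    inner_add_right, real_inner_smul_left, real_inner_smul_right]
  rw [real_inner_comm p q, real_inner_comm p r, real_inner_comm q r]
  field_simp
  ring

/-- One step, rewritten in terms of the gradient at the new iterate. -/
lemma one_step_descent {ρ η C C' D : ℝ} (hm : η - ρ ≠ 0)
    (hC : ρ ^ 2 * C' = C + 1 + ρ) (q r : E)
    (hD : ‖r - ρ • q‖ ^ 2 / (2 * (η - ρ)) + (1 + ρ) * ‖q‖ ^ 2 / 2 ≤ D) :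
    C' * (‖r‖ ^ 2 / 2) + (1 - (ρ + η) * C') / (η - ρ) * (‖r - ρ • q‖ ^ 2 / 2) +
      -ρ * C' * (⟪r - ρ • q, q⟫ - ‖r - ρ • q‖ ^ 2 / (η - ρ)) ≤ C * (‖q‖ ^ 2 / 2) + D := by
  obtain rfl : C = ρ ^ 2 * C' - 1 - ρ := by linarith
  refine le_trans (le_of_eq ?_) (add_le_add_right hD _)
  simp only [← real_inner_self_eq_norm_sq, inner_sub_left, inner_sub_right,
    real_inner_smul_left, real_inner_smul_right]
  rw [real_inner_comm q r]
  field_simp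
  ring

/-- The inductive step: the slack of the previous step pays for the distance-two coupling. -/
lemma multistep_descent_step {ρ η C C' T T' D F : ℝ} (hρ : ρ < 0) (hρ1 : -1 < ρ)
    (hρη : 0 < η + ρ) (hC : ρ ^ 2 * C' = C + 1 + ρ)
    (hT : 0 ≤ T) (hTC : η * (1 + ρ) * T ≤ (η - ρ) ^ 2 * C)
    (hT' : η ^ 2 * T' = (η - ρ) * (1 - (ρ + η) * C') + T) (p q r : E)
    (hpq : 0 ≤ ⟪q - ρ • p, p⟫ - ‖q - ρ • p‖ ^ 2 / (η - ρ))
    (hqr : 0 ≤ ⟪r - ρ • q, q⟫ - ‖r - ρ • q‖ ^ 2 / (η - ρ))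
    (hpr : 0 ≤ ⟪(r - ρ • q) + (q - ρ • p), p + q⟫ -
      ‖(r - ρ • q) + (q - ρ • p)‖ ^ 2 / (η - ρ))
    (hD : ‖r - ρ • q‖ ^ 2 / (2 * (η - ρ)) + (1 + ρ) * ‖q‖ ^ 2 / 2 ≤ D)
    (hF : C * (‖q‖ ^ 2 / 2) + η ^ 2 * T / (η - ρ) ^ 2 * (‖q - ρ • p‖ ^ 2 / 2) +
      -ρ * C * (⟪q - ρ • p, p⟫ - ‖q - ρ • p‖ ^ 2 / (η - ρ)) ≤ F) :
    C' * (‖r‖ ^ 2 / 2) + η ^ 2 * T' / (η - ρ) ^ 2 * (‖r - ρ • q‖ ^ 2 / 2) +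
      -ρ * C' * (⟪r - ρ • q, q⟫ - ‖r - ρ • q‖ ^ 2 / (η - ρ)) ≤ F + D := by
  have hη : 0 < η := by linarith
  have hm : 0 < η - ρ := by linarith
  have hstep := one_step_descent hm.ne' hC q r hD
  have hid := three_point_identity hρ.ne hm.ne' p q r
  set P := ⟪q - ρ • p, p⟫ - ‖q - ρ • p‖ ^ 2 / (η - ρ)
  set Q := ⟪r - ρ • q, q⟫ - ‖r - ρ • q‖ ^ 2 / (η - ρ)
  set R := ⟪(r - ρ • q) + (q - ρ • p), p + q⟫ - ‖(r - ρ • q) + (q - ρ • p)‖ ^ 2 / (η - ρ)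
  have hcoef : η ^ 2 * T' / (η - ρ) ^ 2 =
      (1 - (ρ + η) * C') / (η - ρ) + T / (η - ρ) ^ 2 := by
    rw [hT']
    field_simp
  have hdiff : 2 * η * ρ * (1 + ρ) * P ≤ η ^ 2 * ‖q - ρ • p‖ ^ 2 - ‖r - ρ • q‖ ^ 2 := by
    have h1 : 0 ≤ (η + ρ) / (η - ρ) * ‖η • (q - ρ • p) - (r - ρ • q)‖ ^ 2 := by positivity
    have h2 : 0 ≤ η * -ρ * R := mul_nonneg (mul_nonneg hη.le (by linarith)) hpr
    have h3 : 0 ≤ η * (1 + ρ) * Q := mul_nonneg (mul_nonneg hη.le (by linarith)) hqr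
    have h4 : ρ * ((1 + ρ) / ρ * Q) = (1 + ρ) * Q := by
      rw [← mul_assoc, mul_div_cancel₀ _ hρ.ne]
    linear_combination h1 + 2 * h2 + 2 * h3 - hid - 2 * η * h4
  have hweight : 0 ≤ T / (η - ρ) ^ 2 := by positivity
  have hslack : η * (1 + ρ) * (T / (η - ρ) ^ 2) ≤ C := by
    rw [← mul_div_assoc, div_le_iff₀ (by positivity)]
    linarith
  have hpay : -ρ * P * (η * (1 + ρ) * (T / (η - ρ) ^ 2)) ≤ -ρ * P * C :=
    mul_le_mul_of_nonneg_left hslack (mul_nonneg (by linarith) hpq)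
  have hcoupling := mul_le_mul_of_nonneg_left hdiff hweight
  rw [mul_div_assoc] at hF
  rw [hcoef]
  linear_combination hstep + hF + hpay + hcoupling / 2

end Step

lemma sq_mul_Efun_sub_succ (n : ℕ) {ρ η : ℝ} (hρ : ρ ≠ 0) (hη : η ≠ 0) :
    η ^ 2 * (Efun (n + 1) η - Efun (n + 1) ρ) =
      (η - ρ) * (1 - (ρ + η) * Efun (n + 1) ρ) + (Efun n η - Efun n ρ) := by
  linear_combination sq_mul_Efun_succ n hη - sq_mul_Efun_succ n hρ

section GradientStep

variable {E : Type*} [NormedAddCommGroup E] [InnerProductSpace ℝ E] [CompleteSpace E]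
  {f : E → ℝ} {L μ γ : ℝ}

lemma cocoercivity (hμL : μ < L) (hdiff : Differentiable ℝ f)
    (hsmooth : ConvexOn ℝ Set.univ (fun z => L / 2 * ‖z‖ ^ 2 - f z))
    (hcurv : ConvexOn ℝ Set.univ (fun z => f z - μ / 2 * ‖z‖ ^ 2)) (hγ : 0 < γ) {a b d : E}
    (hab : a - b = γ • d) :
    0 ≤ ⟪(γ * L) • d - (gradient f a - gradient f b), d⟫ -
      ‖(γ * L) • d - (gradient f a - gradient f b)‖ ^ 2 / (γ * (L - μ)) := by
  have h1 := interpolation_inequality hμL hdiff hsmooth hcurv a b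
  have h2 := interpolation_inequality hμL hdiff hsmooth hcurv b a
  have hM : 0 < L - μ := by linarith
  rw [show L • (b - a) - (gradient f b - gradient f a) =
    -(L • (a - b) - (gradient f a - gradient f b)) by module, ← neg_sub a b, norm_neg, norm_neg,
    inner_neg_right] at h2
  rw [hab, smul_smul, mul_comm L γ] at h1 h2
  set W := (γ * L) • d - (gradient f a - gradient f b) with hW
  have hWd : ⟪W, d⟫ = γ * L * ‖d‖ ^ 2 - (⟪gradient f a, d⟫ - ⟪gradient f b, d⟫) := by
    rw [hW, inner_sub_left, inner_sub_left, real_inner_smul_left, real_inner_self_eq_norm_sq]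
  rw [norm_smul, mul_pow, Real.norm_eq_abs, sq_abs, real_inner_smul_right] at h1 h2
  have hsum : 0 ≤ γ * (⟪W, d⟫ - ‖W‖ ^ 2 / (γ * (L - μ))) := by
    have h3 : γ * (‖W‖ ^ 2 / (γ * (L - μ))) = 2 * (‖W‖ ^ 2 / (2 * (L - μ))) := by
      field_simp
    rw [mul_sub, h3, hWd]
    linarith
  exact nonneg_of_mul_nonneg_right hsum hγ

lemma gradient_step_descent (hμL : μ < L) (hdiff : Differentiable ℝ f)
    (hsmooth : ConvexOn ℝ Set.univ (fun z => L / 2 * ‖z‖ ^ 2 - f z))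
    (hcurv : ConvexOn ℝ Set.univ (fun z => f z - μ / 2 * ‖z‖ ^ 2)) (hγ : 0 < γ) {a b : E}
    (hab : b = a - γ • gradient f a) :
    ‖gradient f b - (1 - γ * L) • gradient f a‖ ^ 2 / (2 * (γ * (L - μ))) +
      (1 + (1 - γ * L)) * ‖gradient f a‖ ^ 2 / 2 ≤ (f a - f b) / γ := by
  have h := interpolation_inequality hμL hdiff hsmooth hcurv b a
  have hM : 0 < L - μ := by linarith
  have hba : b - a = -(γ • gradient f a) := by rw [hab]; abel
  rw [hba, show L • -(γ • gradient f a) - (gradient f b - gradient f a) =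
    -(gradient f b - (1 - γ * L) • gradient f a) by module, norm_neg, norm_neg, inner_neg_right,
    norm_smul, mul_pow, Real.norm_eq_abs, sq_abs, real_inner_smul_right,
    real_inner_self_eq_norm_sq] at h
  set W := gradient f b - (1 - γ * L) • gradient f a
  rw [le_div_iff₀ hγ]
  have h3 : ‖W‖ ^ 2 / (2 * (γ * (L - μ))) * γ = ‖W‖ ^ 2 / (2 * (L - μ)) := by
    field_simp
  linarith

end GradientStep

/-- **Multistep descent towards the linear regime
(Lemma 9 / `lemma:general_lemma_ct_h_to_Linear`).**
Let `f ∈ F_{μ,L}`, `κ = μ/L`, `k ≥ 1`, and `γ > 0` with `γL ∈ (1, 2/(1+[κ]₊))` and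
`T_i(γL,κ) ≥ 0` for all `1 ≤ i ≤ k` (i.e. `γL ≥ γ̄_k`). With `ρ = 1−γL`, `η = 1−γμ`,
after `k+1` gradient steps:
`(f(x₀) − f(x_{k+1}))/γ ≥ E_{k+1}(ρ)·‖∇f(x_{k+1})‖²/2 +
 (η²T_{k+1}/(η−ρ)²)·‖∇f(x_{k+1}) − ρ∇f(x_k)‖²/2`. -/
theorem multistep_descent_to_linear_regime
    {E : Type*} [NormedAddCommGroup E] [InnerProductSpace ℝ E] [CompleteSpace E]
    (L μ : ℝ) (hL : 0 < L) (hμL : μ < L) (κ : ℝ) (hκ : κ = μ / L)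
    (f : E → ℝ) (hdiff : Differentiable ℝ f)
    (hsmooth : ConvexOn ℝ Set.univ (fun z => L / 2 * ‖z‖ ^ 2 - f z))
    (hcurv : ConvexOn ℝ Set.univ (fun z => f z - μ / 2 * ‖z‖ ^ 2))
    (k : ℕ) (hk : 1 ≤ k)
    (γ : ℝ) (hγ : 0 < γ) (hγL : 1 < γ * L) (hγL' : γ * L < 2 / (1 + max κ 0))
    (hT : ∀ i : ℕ, 1 ≤ i → i ≤ k → 0 ≤ Tfun i (γ * L) κ)
    (x : ℕ → E) (hx : ∀ i ≤ k, x (i + 1) = x i - γ • gradient f (x i))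
    (ρ η : ℝ) (hρ : ρ = 1 - γ * L) (hη : η = 1 - γ * μ) :
    (f (x 0) - f (x (k + 1))) / γ ≥
      Efun (k + 1) ρ * (‖gradient f (x (k + 1))‖ ^ 2 / 2) +
        η ^ 2 * Tfun (k + 1) (γ * L) κ / (η - ρ) ^ 2 *
          (‖gradient f (x (k + 1)) - ρ • gradient f (x k)‖ ^ 2 / 2) := by
  have hLne := hL.ne'
  have hγμ : κ * (γ * L) = γ * μ := by
    rw [hκ]
    field_simp
  have hmax : γ * L * (1 + max κ 0) < 2 := (lt_div_iff₀ (by positivity)).1 hγL'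
  have hγL0 : 0 < γ * L := by linarith
  have hρ0 : ρ < 0 := by linarith
  have hρ1 : -1 < ρ := by
    have := mul_nonneg hγL0.le (le_max_right κ 0)
    linarith
  have hρη : 0 < η + ρ := by
    have := mul_le_mul_of_nonneg_left (le_max_left κ 0) hγL0.le
    linarith
  have hη0 : 0 < η := by linarith
  have hm : γ * (L - μ) = η - ρ := by rw [hρ, hη]; ring
  have hTE (n : ℕ) : Tfun n (γ * L) κ = Efun n η - Efun n ρ := by
    rw [Tfun, hγμ, hρ, hη]
  have hcoc {i : ℕ} (hi : i ≤ k) :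
      0 ≤ ⟪gradient f (x (i + 1)) - ρ • gradient f (x i), gradient f (x i)⟫ -
        ‖gradient f (x (i + 1)) - ρ • gradient f (x i)‖ ^ 2 / (η - ρ) := by
    have h := cocoercivity hμL hdiff hsmooth hcurv hγ (a := x i) (b := x (i + 1))
      (d := gradient f (x i)) (by rw [hx i hi]; abel)
    rwa [hm, show (γ * L) • gradient f (x i) - (gradient f (x i) - gradient f (x (i + 1))) =
      gradient f (x (i + 1)) - ρ • gradient f (x i) by rw [hρ]; module] at h
  have hcoc₂ {i : ℕ} (hi : i + 1 ≤ k) :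
      0 ≤ ⟪(gradient f (x (i + 2)) - ρ • gradient f (x (i + 1))) +
          (gradient f (x (i + 1)) - ρ • gradient f (x i)),
          gradient f (x i) + gradient f (x (i + 1))⟫ -
        ‖(gradient f (x (i + 2)) - ρ • gradient f (x (i + 1))) +
          (gradient f (x (i + 1)) - ρ • gradient f (x i))‖ ^ 2 / (η - ρ) := by
    have h := cocoercivity hμL hdiff hsmooth hcurv hγ (a := x i) (b := x (i + 2))
      (d := gradient f (x i) + gradient f (x (i + 1)))
      (by rw [hx (i + 1) hi, hx i (by omega)]; module)
    rwa [hm, show (γ * L) • (gradient f (x i) + gradient f (x (i + 1))) -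
        (gradient f (x i) - gradient f (x (i + 2))) =
      (gradient f (x (i + 2)) - ρ • gradient f (x (i + 1))) +
        (gradient f (x (i + 1)) - ρ • gradient f (x i)) by rw [hρ]; module] at h
  have hdesc {i : ℕ} (hi : i ≤ k) :
      ‖gradient f (x (i + 1)) - ρ • gradient f (x i)‖ ^ 2 / (2 * (η - ρ)) +
        (1 + ρ) * ‖gradient f (x i)‖ ^ 2 / 2 ≤ (f (x i) - f (x (i + 1))) / γ := by
    have h := gradient_step_descent hμL hdiff hsmooth hcurv hγ (hx i hi)
    rwa [hm, ← hρ] at h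
  have hind : ∀ n ≤ k,
      Efun (n + 1) ρ * (‖gradient f (x (n + 1))‖ ^ 2 / 2) +
        η ^ 2 * (Efun (n + 1) η - Efun (n + 1) ρ) / (η - ρ) ^ 2 *
          (‖gradient f (x (n + 1)) - ρ • gradient f (x n)‖ ^ 2 / 2) +
        -ρ * Efun (n + 1) ρ *
          (⟪gradient f (x (n + 1)) - ρ • gradient f (x n), gradient f (x n)⟫ -
            ‖gradient f (x (n + 1)) - ρ • gradient f (x n)‖ ^ 2 / (η - ρ)) ≤
        (f (x 0) - f (x (n + 1))) / γ := by
    intro n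
    induction n with
    | zero =>
      intro hn
      have h := one_step_descent (by linarith) (sq_mul_Efun_succ 0 hρ0.ne) _ _ (hdesc hn)
      have hcoef : η ^ 2 * (Efun (0 + 1) η - Efun (0 + 1) ρ) / (η - ρ) ^ 2 =
          (1 - (ρ + η) * Efun (0 + 1) ρ) / (η - ρ) := by
        have hne : η - ρ ≠ 0 := by linarith
        rw [sq_mul_Efun_sub_succ 0 hρ0.ne hη0.ne', Efun_zero, Efun_zero]
        field_simp
        ring
      rw [Efun_zero, zero_mul, zero_add ((_ : ℝ) / γ)] at h
      rwa [hcoef]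
    | succ n ih =>
      intro hn
      have h := multistep_descent_step hρ0 hρ1 hρη (sq_mul_Efun_succ (n + 1) hρ0.ne)
        (by rw [← hTE]; exact hT (n + 1) (by omega) hn)
        (mul_Efun_sub_le (n + 1) hρ0 hρ1 hρη) (sq_mul_Efun_sub_succ (n + 1) hρ0.ne hη0.ne')
        _ _ _ (hcoc (by omega)) (hcoc hn) (hcoc₂ hn) (hdesc hn) (ih (by omega))
      rwa [← add_div, sub_add_sub_cancel] at h
  have hslack := mul_nonneg
    (mul_nonneg (by linarith : 0 ≤ -ρ) (Efun_nonneg (k + 1) hρ0.ne hρ1.le)) (hcoc le_rfl)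
  have hfinal := hind k le_rfl
  rw [hTE]
  linarith
end
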